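/- arXiv:0812.0335 — 5 statements merged into one kernel-verified Lean document; each statement's English description precedes it below -/
import Mathlib

section
/- Let V be a real inner product space of dimension n ≥ 4 and let R be an algebraic curvature tensor on V with nonnegative isotropic curvature. Suppose {e_1,e_2,e_3,e_4} is an orthonormal four-frame in V satisfying R(e_1,e_3,e_1,e_3) + R(e_1,e_4,e_1,e_4) + R(e_2,e_3,e_2,e_3) + R(e_2,e_4,e_2,e_4) − 2R(e_1,e_2,e_3,e_4) = 0. Then Q(R)(e_1,e_3,e_1,e_3) + Q(R)(e_1,e_4,e_1,e_4) + Q(R)(e_2,e_3,e_2,e_3) + Q(R)(e_2,e_4,e_2,e_4) − 2Q(R)(e_1,e_2,e_3,e_4) ≥ 0. -/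
/-!
Write `R` as a Hermitian form `M` on the tensor square of the complexification of `V`, and let
`z = e₁ + i e₂`, `w = e₃ + i e₄`. The isotropic curvature of the frame is `M(z ⊗ w, z ⊗ w)`
(`quadRe_tens`), and nonnegative isotropic curvature means that `M` is nonnegative on `x ⊗ y` for
all `x, y` spanning a totally isotropic subspace (`quadRe_tens_nonneg`).

At the zero `z ⊗ w` the form `M` is therefore nonnegative on all tangent directions
`y ⊗ w + z ⊗ v` of this set of tensors (`quadRe_variation_nonneg`). The tangent directions are
realized by paths depending polynomially on a complex parameter `τ`, so the mixed terms of the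
second variation can be averaged away over `τ, -τ, iτ, -iτ` (`quadRe_nonneg_of_family`).

Following Wilking's Lie-algebraic argument, the tangent directions contain all brackets `L x` of
elements `x` with `ω = z ∧ w`, where `L = ad ω`. Hence `P = Lᴴ M L` is positive semidefinite, and so
is `L M Lᴴ = Pᵀ`, because `L` is skew-symmetric and `M` is real symmetric. An eigenvector of `P` of
positive eigenvalue lies in the range of `Lᴴ`, on which `M` is nonnegative, so `tr (P M) ≥ 0`
(`trace_nonneg_of_posSemidef`, `trace_adMat_nonneg`).

The isotropic curvature expression of `Q(R)` is a sum of squares plus one quarter of `tr (P M)`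
(`isoCurv_Qop`, `trace_leftMat_eq`, `trace_adMat_eq`), hence nonnegative.
-/

open scoped RealInnerProductSpace
open Finset

variable {V : Type*} [NormedAddCommGroup V] [InnerProductSpace ℝ V]

/-- An algebraic curvature tensor on a real inner product space: a multilinear map
(linearity in the first slot, together with the symmetries, gives full multilinearity)
satisfying the standard symmetries and the first Bianchi identity. -/
structure IsAlgCurvTensor (R : V → V → V → V → ℝ) : Prop where
  addLeft : ∀ X X' Y Z W, R (X + X') Y Z W = R X Y Z W + R X' Y Z W
  smulLeft : ∀ (c : ℝ) (X Y Z W : V), R (c • X) Y Z W = c * R X Y Z W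
  antisymm : ∀ X Y Z W, R X Y Z W = - R Y X Z W
  pairSymm : ∀ X Y Z W, R X Y Z W = R Z W X Y
  bianchi : ∀ X Y Z W, R X Y Z W + R Y Z X W + R Z X Y W = 0

/-- The bilinear expression `B(R,S)`, computed with respect to an orthonormal basis
(the result is independent of the choice of orthonormal basis). -/
noncomputable def Bop [FiniteDimensional ℝ V] (R S : V → V → V → V → ℝ)
    (X Y Z W : V) : ℝ :=
  let b := stdOrthonormalBasis ℝ V
  (1 / 2) * ∑ p, ∑ q,
      (R X Y (b p) (b q) * S Z W (b p) (b q) + R Z W (b p) (b q) * S X Y (b p) (b q))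
  + ∑ p, ∑ q,
      (R X (b p) Z (b q) * S Y (b p) W (b q) + R Y (b p) W (b q) * S X (b p) Z (b q))
  - ∑ p, ∑ q,
      (R X (b p) W (b q) * S Y (b p) Z (b q) + R Y (b p) Z (b q) * S X (b p) W (b q))

/-- `Q(R) = B(R,R)`. -/
noncomputable def Qop [FiniteDimensional ℝ V] (R : V → V → V → V → ℝ) :
    V → V → V → V → ℝ :=
  Bop R R

/-- `R` has nonnegative isotropic curvature. -/
def NonnegIsotropic (R : V → V → V → V → ℝ) : Prop :=
  ∀ e₁ e₂ e₃ e₄ : V, Orthonormal ℝ ![e₁, e₂, e₃, e₄] →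
    0 ≤ R e₁ e₃ e₁ e₃ + R e₁ e₄ e₁ e₄ + R e₂ e₃ e₂ e₃ + R e₂ e₄ e₂ e₄
        - 2 * R e₁ e₂ e₃ e₄

/-- The Ricci tensor of an algebraic curvature tensor. -/
noncomputable def RicciT [FiniteDimensional ℝ V] (R : V → V → V → V → ℝ)
    (X Y : V) : ℝ :=
  ∑ p, R X (stdOrthonormalBasis ℝ V p) Y (stdOrthonormalBasis ℝ V p)

/-- An orthogonal complex structure on `V`. -/
def IsOrthCplx (J : V →ₗ[ℝ] V) : Prop :=
  (∀ X, J (J X) = -X) ∧ (∀ X Y : V, ⟪J X, J Y⟫ = ⟪X, Y⟫)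

/-- A quaternionic structure on `V`: three orthogonal complex structures with `IJK = -id`. -/
def IsQuatStruct (I J K : V →ₗ[ℝ] V) : Prop :=
  IsOrthCplx I ∧ IsOrthCplx J ∧ IsOrthCplx K ∧ ∀ X, I (J (K X)) = -X

/-- `R` is `J`-invariant (Kähler). -/
def IsKaehlerTensor (J : V →ₗ[ℝ] V) (R : V → V → V → V → ℝ) : Prop :=
  ∀ X Y Z W, R X Y (J Z) (J W) = R X Y Z W

/-- `R` is hyper-Kähler with respect to the quaternionic structure `I, J, K`. -/
def IsHyperKaehler (I J K : V →ₗ[ℝ] V) (R : V → V → V → V → ℝ) : Prop :=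
  IsKaehlerTensor I R ∧ IsKaehlerTensor J R ∧ IsKaehlerTensor K R

/-- The curvature tensor `R₀` of quaternionic projective space, associated to a
quaternionic structure `I, J, K`. -/
noncomputable def quatR0 (I J K : V →ₗ[ℝ] V) (X Y Z W : V) : ℝ :=
  (1 / 4) * (⟪X, Z⟫ * ⟪Y, W⟫ - ⟪X, W⟫ * ⟪Y, Z⟫
    + 2 * ⟪I X, Y⟫ * ⟪I Z, W⟫ + ⟪I X, Z⟫ * ⟪I Y, W⟫ - ⟪I X, W⟫ * ⟪I Y, Z⟫
    + 2 * ⟪J X, Y⟫ * ⟪J Z, W⟫ + ⟪J X, Z⟫ * ⟪J Y, W⟫ - ⟪J X, W⟫ * ⟪J Y, Z⟫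
    + 2 * ⟪K X, Y⟫ * ⟪K Z, W⟫ + ⟪K X, Z⟫ * ⟪K Y, W⟫ - ⟪K X, W⟫ * ⟪K Y, Z⟫)

/-! ### Hermitian forms and traces -/

section MatrixLemmas

open Matrix ComplexOrder

variable {m : Type*} [Fintype m]

/-- The form of `Lᴴ M L` is the form of `M` pulled back along `L`. -/
theorem dot_conj_mulVec (L M : Matrix m m ℂ) (x : m → ℂ) :
    star x ⬝ᵥ ((Lᴴ * M * L) *ᵥ x) = star (L *ᵥ x) ⬝ᵥ (M *ᵥ (L *ᵥ x)) := by
  rw [star_mulVec, ← dotProduct_mulVec, mulVec_mulVec, mulVec_mulVec, mul_assoc]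

/-- If both `P = Lᴴ M L` and `L M Lᴴ` are positive semidefinite, then `tr (P M) ≥ 0`, although `M`
itself may be indefinite: diagonalizing `P`, only its eigenvectors of positive eigenvalue
contribute, and these lie in the range of `Lᴴ`, on which `M` is nonnegative. -/
theorem trace_nonneg_of_posSemidef [DecidableEq m] {L M : Matrix m m ℂ}
    (hP : (Lᴴ * M * L).PosSemidef) (hP' : (L * M * Lᴴ).PosSemidef) :
    0 ≤ (Lᴴ * M * L * M).trace := by
  set P := Lᴴ * M * L with hPdef
  have hH := hP.isHermitian
  set U : Matrix m m ℂ := (hH.eigenvectorUnitary : Matrix m m ℂ) with hU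
  have hcol : ∀ j, 0 ≤ (hH.eigenvalues j : ℂ) *
      (star (U.col j) ⬝ᵥ (M *ᵥ (U.col j))) := by
    intro j
    rcases (hP.eigenvalues_nonneg j).eq_or_lt with h0 | h0
    · rw [← h0]; simp
    · -- an eigenvector for a positive eigenvalue lies in the range of `Lᴴ`
      have h1 : Lᴴ *ᵥ (M *ᵥ (L *ᵥ U.col j)) = (hH.eigenvalues j : ℂ) • U.col j := by
        have := hH.mulVec_eigenvectorBasis j
        rw [mulVec_mulVec, mulVec_mulVec, ← hPdef, hU, hH.eigenvectorUnitary_col_eq,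
          this]
        ext; simp
      have h2 := hP'.dotProduct_mulVec_nonneg (M *ᵥ (L *ᵥ U.col j))
      have h3 := dot_conj_mulVec Lᴴ M (M *ᵥ (L *ᵥ U.col j))
      rw [conjTranspose_conjTranspose] at h3
      rw [h3, h1, mulVec_smul, star_smul, smul_dotProduct, dotProduct_smul] at h2
      have h4 : 0 ≤ ((hH.eigenvalues j)⁻¹ : ℂ) := by
        rw [← Complex.ofReal_inv]; exact_mod_cast (inv_nonneg.2 h0.le)
      have h5 := mul_nonneg h4 h2
      have h6 : (hH.eigenvalues j : ℂ) ≠ 0 := by exact_mod_cast h0.ne'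
      simp only [smul_eq_mul, Complex.star_def, Complex.conj_ofReal] at h5
      rwa [← mul_assoc, inv_mul_cancel₀ h6, one_mul] at h5
  have htr : (P * M).trace = ∑ j, (hH.eigenvalues j : ℂ) *
      (star (U.col j) ⬝ᵥ (M *ᵥ (U.col j))) := by
    have h1 : P = U * diagonal (RCLike.ofReal ∘ hH.eigenvalues) * Uᴴ := by
      have := hH.spectral_theorem
      rw [Unitary.conjStarAlgAut_apply] at this
      exact this
    rw [congrArg (fun X => (X * M).trace) h1]
    simp only [mul_assoc]
    rw [trace_mul_comm, mul_assoc, trace]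
    refine Finset.sum_congr rfl fun j _ => ?_
    rw [diag_apply, diagonal_mul, mul_assoc]
    rfl
  rw [htr]
  exact Finset.sum_nonneg fun j _ => hcol j

/-- The real quadratic form of a complex matrix. -/
noncomputable def quadRe (M : Matrix m m ℂ) (x : m → ℂ) : ℝ := (star x ⬝ᵥ (M *ᵥ x)).re

theorem quadRe_smul (M : Matrix m m ℂ) (c : ℂ) (x : m → ℂ) :
    quadRe M (c • x) = Complex.normSq c * quadRe M x := by
  simp only [quadRe, mulVec_smul, star_smul, smul_dotProduct, dotProduct_smul, smul_eq_mul,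
    ← mul_assoc]
  rw [Complex.star_def, Complex.mul_conj, Complex.re_ofReal_mul]

/-- The parallelogram law. -/
theorem quadRe_add_sub (M : Matrix m m ℂ) (x y : m → ℂ) :
    quadRe M (x + y) + quadRe M (x - y) = 2 * quadRe M x + 2 * quadRe M y := by
  simp only [quadRe, mulVec_add, mulVec_sub, star_add, star_sub, add_dotProduct, sub_dotProduct,
    dotProduct_add, dotProduct_sub, Complex.add_re, Complex.sub_re]
  ring

/-- The first derivative `v₁` of a polynomial path through a zero `v₀` of a quadratic form which is
nonnegative along the path: averaging over the parameters `τ, -τ, iτ, -iτ` removes the cross terms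
of order at most two, so that `v₁` contributes the leading term. -/
theorem quadRe_nonneg_of_family (M : Matrix m m ℂ) (v₀ v₁ v₂ v₃ v₄ v₅ : m → ℂ)
    (h0 : quadRe M v₀ = 0)
    (h : ∀ τ : ℂ, 0 ≤ quadRe M (v₀ + τ • v₁ + τ ^ 2 • v₂ + τ ^ 3 • v₃ + τ ^ 4 • v₄ + τ ^ 5 • v₅)) :
    0 ≤ quadRe M v₁ := by
  have hE : ∀ τ : ℂ, 0 ≤ quadRe M (v₀ + τ ^ 2 • v₂ + τ ^ 4 • v₄)
      + Complex.normSq τ * quadRe M (v₁ + τ ^ 2 • v₃ + τ ^ 4 • v₅) := by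
    intro τ
    have h1 := h τ
    have h2 := h (-τ)
    have h3 := quadRe_add_sub M (v₀ + τ ^ 2 • v₂ + τ ^ 4 • v₄)
      (τ • (v₁ + τ ^ 2 • v₃ + τ ^ 4 • v₅))
    rw [quadRe_smul] at h3
    have e1 : v₀ + τ • v₁ + τ ^ 2 • v₂ + τ ^ 3 • v₃ + τ ^ 4 • v₄ + τ ^ 5 • v₅ =
      (v₀ + τ ^ 2 • v₂ + τ ^ 4 • v₄) + (τ • (v₁ + τ ^ 2 • v₃ + τ ^ 4 • v₅)) := by module
    have e2 : v₀ + (-τ) • v₁ + (-τ) ^ 2 • v₂ + (-τ) ^ 3 • v₃ + (-τ) ^ 4 • v₄ + (-τ) ^ 5 • v₅ =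
      (v₀ + τ ^ 2 • v₂ + τ ^ 4 • v₄) - (τ • (v₁ + τ ^ 2 • v₃ + τ ^ 4 • v₅)) := by module
    rw [e1] at h1
    rw [e2] at h2
    linarith
  have hS : ∀ t : ℝ, 0 ≤ quadRe M (v₀ + (t ^ 4 : ℂ) • v₄) + t ^ 4 * quadRe M v₂
      + t ^ 2 * (quadRe M (v₁ + (t ^ 4 : ℂ) • v₅) + t ^ 4 * quadRe M v₃) := by
    intro t
    have h1 := hE t
    have h2 := hE (t * Complex.I)
    have h3 := quadRe_add_sub M (v₀ + (t ^ 4 : ℂ) • v₄) ((t ^ 2 : ℂ) • v₂)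
    have h4 := quadRe_add_sub M (v₁ + (t ^ 4 : ℂ) • v₅) ((t ^ 2 : ℂ) • v₃)
    rw [quadRe_smul] at h3 h4
    have e0 : Complex.normSq ((t : ℂ) ^ 2) = t ^ 4 := by
      rw [map_pow, Complex.normSq_ofReal]; ring
    have i2 : ((t : ℂ) * Complex.I) ^ 2 = - (t : ℂ) ^ 2 := by
      rw [mul_pow, Complex.I_sq]; ring
    have i4 : ((t : ℂ) * Complex.I) ^ 4 = (t : ℂ) ^ 4 := by
      rw [mul_pow, Complex.I_pow_four]; ring
    rw [i2, i4, map_mul, Complex.normSq_I, Complex.normSq_ofReal] at h2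
    rw [Complex.normSq_ofReal] at h1
    rw [e0] at h3 h4
    have a1 : v₀ + (t ^ 2 : ℂ) • v₂ + (t ^ 4 : ℂ) • v₄ =
      v₀ + (t ^ 4 : ℂ) • v₄ + (t ^ 2 : ℂ) • v₂ := by module
    have a2 : v₁ + (t ^ 2 : ℂ) • v₃ + (t ^ 4 : ℂ) • v₅ =
      v₁ + (t ^ 4 : ℂ) • v₅ + (t ^ 2 : ℂ) • v₃ := by module
    have a3 : v₀ + (-t ^ 2 : ℂ) • v₂ + (t ^ 4 : ℂ) • v₄ =
      v₀ + (t ^ 4 : ℂ) • v₄ - (t ^ 2 : ℂ) • v₂ := by module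
    have a4 : v₁ + (-t ^ 2 : ℂ) • v₃ + (t ^ 4 : ℂ) • v₅ =
      v₁ + (t ^ 4 : ℂ) • v₅ - (t ^ 2 : ℂ) • v₃ := by module
    rw [a1, a2] at h1
    rw [a3, a4] at h2
    have h5 := congrArg (fun s => t ^ 2 * s) h4
    nlinarith
  have hexp : ∀ (x y : m → ℂ) (s : ℝ), quadRe M (x + (s : ℂ) • y) =
      quadRe M x + s * ((star x ⬝ᵥ (M *ᵥ y)).re + (star y ⬝ᵥ (M *ᵥ x)).re)
        + s ^ 2 * quadRe M y := by
    intro x y s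
    simp only [quadRe, mulVec_add, mulVec_smul, star_add, star_smul, add_dotProduct,
      smul_dotProduct, dotProduct_smul, smul_eq_mul, Complex.star_def, Complex.conj_ofReal,
      dotProduct_add, Complex.add_re, Complex.re_ofReal_mul]
    ring
  set A := (star v₀ ⬝ᵥ (M *ᵥ v₄)).re + (star v₄ ⬝ᵥ (M *ᵥ v₀)).re
  set B := (star v₁ ⬝ᵥ (M *ᵥ v₅)).re + (star v₅ ⬝ᵥ (M *ᵥ v₁)).re
  -- divide the averaged inequality by `t ^ 2` and let `t → 0`
  have hT : ∀ t : ℝ, 0 < t → 0 ≤ quadRe M v₁ + t ^ 2 * (A + t ^ 4 * quadRe M v₄ + quadRe M v₂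
      + t ^ 2 * B + t ^ 6 * quadRe M v₅ + t ^ 2 * quadRe M v₃) := by
    intro t ht
    have h1 := hS t
    have c4 : (t : ℂ) ^ 4 = ((t ^ 4 : ℝ) : ℂ) := by push_cast; rfl
    rw [c4, hexp, hexp, h0] at h1
    have h2 : 0 < t ^ 2 := by positivity
    refine nonneg_of_mul_nonneg_right ?_ h2
    refine h1.trans (le_of_eq ?_)
    ring
  have hlim : Filter.Tendsto (fun t : ℝ => quadRe M v₁ + t ^ 2 * (A + t ^ 4 * quadRe M v₄
      + quadRe M v₂ + t ^ 2 * B + t ^ 6 * quadRe M v₅ + t ^ 2 * quadRe M v₃))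
      (nhdsWithin 0 (Set.Ioi 0)) (nhds (quadRe M v₁)) := by
    have : Continuous (fun t : ℝ => quadRe M v₁ + t ^ 2 * (A + t ^ 4 * quadRe M v₄
      + quadRe M v₂ + t ^ 2 * B + t ^ 6 * quadRe M v₅ + t ^ 2 * quadRe M v₃)) := by fun_prop
    have h2 := this.tendsto 0
    simp only [ne_eq, OfNat.ofNat_ne_zero, not_false_eq_true, zero_pow, zero_mul, add_zero] at h2
    exact h2.mono_left nhdsWithin_le_nhds
  refine ge_of_tendsto hlim ?_
  filter_upwards [self_mem_nhdsWithin] with t ht using hT t ht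

end MatrixLemmas

/-! ### Algebraic curvature tensors -/

section CurvatureTensor

namespace IsAlgCurvTensor

variable {R : V → V → V → V → ℝ} (hR : IsAlgCurvTensor R)
include hR

theorem antisymm' (X Y Z W : V) : R X Y Z W = - R X Y W Z := by
  rw [hR.pairSymm X Y Z W, hR.antisymm Z W X Y, hR.pairSymm W Z X Y]

theorem smul2 (c : ℝ) (X Y Z W : V) : R X (c • Y) Z W = c * R X Y Z W := by
  rw [hR.antisymm X (c • Y), hR.smulLeft, hR.antisymm Y X]; ring

theorem smul3 (c : ℝ) (X Y Z W : V) : R X Y (c • Z) W = c * R X Y Z W := by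
  rw [hR.pairSymm X Y, hR.smulLeft, hR.pairSymm Z W]

theorem smul4 (c : ℝ) (X Y Z W : V) : R X Y Z (c • W) = c * R X Y Z W := by
  rw [hR.pairSymm X Y, hR.smul2, hR.pairSymm Z W]

/-- A consequence of the first Bianchi identity: the tensor is determined by the components
`R(X, P, Y, Q)` with the arguments `P` and `Q` in the second and fourth slot. -/
theorem eq_sub (X Y P Q : V) : R X Y P Q = R X P Y Q - R X Q Y P := by
  have h1 := hR.bianchi X Y P Q
  have h2 := hR.antisymm P X Y Q
  have h3 := hR.pairSymm X Q Y P
  have h4 := hR.antisymm' Y P X Q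
  linarith

theorem expand_one {ι : Type*} [Fintype ι] (b : OrthonormalBasis ι ℝ V) (X Y Z W : V) :
    R X Y Z W = ∑ i, ⟪b i, X⟫ * R (b i) Y Z W := by
  let f : V →ₗ[ℝ] ℝ :=
    { toFun := fun X => R X Y Z W
      map_add' := fun X X' => hR.addLeft X X' Y Z W
      map_smul' := fun c X => hR.smulLeft c X Y Z W }
  have h : f X = ∑ i, ⟪b i, X⟫ * f (b i) := by
    conv_lhs => rw [← b.sum_repr' X]
    simp only [map_sum, map_smul, smul_eq_mul]
  exact h

theorem expand_two {ι : Type*} [Fintype ι] (b : OrthonormalBasis ι ℝ V) (X Y Z W : V) :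
    R X Y Z W = ∑ p : ι × ι, ⟪b p.1, X⟫ * ⟪b p.2, Y⟫ * R (b p.1) (b p.2) Z W := by
  rw [Fintype.sum_prod_type, hR.expand_one b]
  refine Finset.sum_congr rfl fun i _ => ?_
  rw [hR.antisymm, hR.expand_one b Y, ← Finset.sum_neg_distrib, Finset.mul_sum]
  refine Finset.sum_congr rfl fun j _ => ?_
  rw [hR.antisymm (b j) (b i)]
  ring

theorem expand_four {ι : Type*} [Fintype ι] (b : OrthonormalBasis ι ℝ V) (X Y Z W : V) :
    R X Y Z W = ∑ p : ι × ι, ∑ q : ι × ι, ⟪b p.1, X⟫ * ⟪b p.2, Y⟫ *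
      (R (b p.1) (b p.2) (b q.1) (b q.2) * (⟪b q.1, Z⟫ * ⟪b q.2, W⟫)) := by
  rw [hR.expand_two b]
  refine Finset.sum_congr rfl fun p _ => ?_
  rw [hR.pairSymm, hR.expand_two b Z W, Finset.mul_sum]
  refine Finset.sum_congr rfl fun q _ => ?_
  rw [hR.pairSymm (b q.1)]
  ring

end IsAlgCurvTensor

/-- The isotropic curvature expression of four vectors, which need not be orthonormal. -/
def isoCurv (R : V → V → V → V → ℝ) (X Y X' Y' : V) : ℝ :=
  R X X' X X' + R X Y' X Y' + R Y X' Y X' + R Y Y' Y Y' - 2 * R X Y X' Y'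

/-- Nonnegative isotropic curvature, with the two pairs of unit vectors rescaled separately. -/
theorem isoCurv_nonneg_of_conformal {R : V → V → V → V → ℝ} (hR : IsAlgCurvTensor R)
    (hnn : NonnegIsotropic R) {X Y X' Y' : V} (h1 : ⟪X, X⟫ = ⟪Y, Y⟫) (h2 : ⟪X', X'⟫ = ⟪Y', Y'⟫)
    (h3 : ⟪X, Y⟫ = 0) (h4 : ⟪X', Y'⟫ = 0) (h5 : ⟪X, X'⟫ = 0) (h6 : ⟪X, Y'⟫ = 0)
    (h7 : ⟪Y, X'⟫ = 0) (h8 : ⟪Y, Y'⟫ = 0) : 0 ≤ isoCurv R X Y X' Y' := by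
  have z1 : ∀ A B C : V, R 0 A B C = 0 := fun A B C => by
    simpa using hR.smulLeft 0 0 A B C
  have z2 : ∀ A B C : V, R A 0 B C = 0 := fun A B C => by
    simpa using hR.smul2 0 A 0 B C
  by_cases hX : X = 0
  · subst hX
    have hY : Y = 0 := by rw [inner_zero_left] at h1; exact inner_self_eq_zero.1 h1.symm
    subst hY
    simp [isoCurv, z1]
  by_cases hX' : X' = 0
  · subst hX'
    have hY : Y' = 0 := by rw [inner_zero_left] at h2; exact inner_self_eq_zero.1 h2.symm
    subst hY
    simp only [isoCurv, z2, hR.pairSymm X Y]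
    norm_num
  have n1 : ‖X‖ ≠ 0 := norm_ne_zero_iff.2 hX
  have n2 : ‖X'‖ ≠ 0 := norm_ne_zero_iff.2 hX'
  have m1 : ‖Y‖ = ‖X‖ := by
    rw [real_inner_self_eq_norm_sq, real_inner_self_eq_norm_sq] at h1
    exact ((sq_eq_sq₀ (norm_nonneg _) (norm_nonneg _)).1 h1).symm
  have m2 : ‖Y'‖ = ‖X'‖ := by
    rw [real_inner_self_eq_norm_sq, real_inner_self_eq_norm_sq] at h2
    exact ((sq_eq_sq₀ (norm_nonneg _) (norm_nonneg _)).1 h2).symm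
  have ho : Orthonormal ℝ ![‖X‖⁻¹ • X, ‖X‖⁻¹ • Y, ‖X'‖⁻¹ • X', ‖X'‖⁻¹ • Y'] := by
    constructor
    · intro i
      fin_cases i <;> simp [norm_smul, m1, m2, n1, n2]
    · intro i j hij
      fin_cases i <;> fin_cases j <;>
        first
        | exact absurd rfl hij
        | simp [real_inner_smul_left, real_inner_smul_right, h3, h4, h5, h6, h7, h8,
            real_inner_comm X Y, real_inner_comm X' Y', real_inner_comm X X',
            real_inner_comm X Y', real_inner_comm Y X', real_inner_comm Y Y']
  have h := hnn _ _ _ _ ho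
  simp only [hR.smulLeft, hR.smul2, hR.smul3, hR.smul4] at h
  have hpos : 0 < (‖X‖⁻¹ * ‖X'‖⁻¹) ^ 2 := by positivity
  refine nonneg_of_mul_nonneg_right (h.trans (le_of_eq ?_)) hpos
  rw [isoCurv]
  ring

end CurvatureTensor

/-! ### The complex curvature form and its second variation -/

section Complexification

open Matrix ComplexOrder

variable {ι : Type*} [Fintype ι]

/-- The matrix, in an orthonormal basis, of the complex sesquilinear extension of an algebraic
curvature tensor to the second tensor power of the complexification. -/
noncomputable def curvMat (b : OrthonormalBasis ι ℝ V) (R : V → V → V → V → ℝ) :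
    Matrix (ι × ι) (ι × ι) ℂ :=
  Matrix.of fun p q => (R (b p.1) (b p.2) (b q.1) (b q.2) : ℂ)

/-- Coordinates of a real vector, as an element of the complexification. -/
noncomputable def coordC (b : OrthonormalBasis ι ℝ V) (X : V) : ι → ℂ := fun i => (⟪b i, X⟫ : ℂ)

/-- The elementary tensor `z ⊗ w`. -/
def tens (z w : ι → ℂ) : ι × ι → ℂ := fun p => z p.1 * w p.2

omit [Fintype ι] in
theorem tens_add_left (z z' w : ι → ℂ) : tens (z + z') w = tens z w + tens z' w := by
  ext; simp [tens, add_mul]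

omit [Fintype ι] in
theorem tens_add_right (z w w' : ι → ℂ) : tens z (w + w') = tens z w + tens z w' := by
  ext; simp [tens, mul_add]

omit [Fintype ι] in
theorem tens_smul_left (c : ℂ) (z w : ι → ℂ) : tens (c • z) w = c • tens z w := by
  ext; simp [tens, mul_assoc]

omit [Fintype ι] in
theorem tens_smul_right (c : ℂ) (z w : ι → ℂ) : tens z (c • w) = c • tens z w := by
  ext; simp [tens, mul_left_comm]

theorem coordC_dot (b : OrthonormalBasis ι ℝ V) (X Y : V) :
    coordC b X ⬝ᵥ coordC b Y = (⟪X, Y⟫ : ℂ) := by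
  rw [← b.sum_inner_mul_inner X Y]
  simp only [coordC, dotProduct]
  push_cast
  refine Finset.sum_congr rfl fun i _ => ?_
  rw [real_inner_comm]

theorem star_coordC (b : OrthonormalBasis ι ℝ V) (X : V) :
    star (coordC b X) = coordC b X := by
  ext i; simp [coordC]

/-- Every complex vector is the coordinate vector of some `X + i Y`. -/
theorem exists_coordC (b : OrthonormalBasis ι ℝ V) (z : ι → ℂ) :
    ∃ X Y : V, z = coordC b X + Complex.I • coordC b Y := by
  refine ⟨∑ i, (z i).re • b i, ∑ i, (z i).im • b i, ?_⟩
  classical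
  ext i
  simp [coordC, inner_sum, real_inner_smul_right, orthonormal_iff_ite.1 b.orthonormal,
    mul_comm Complex.I]

variable {R : V → V → V → V → ℝ} (hR : IsAlgCurvTensor R) (b : OrthonormalBasis ι ℝ V)
include hR

/-- The defining property of `curvMat`: its form extends `R`. -/
theorem curvMat_tens (X Y Z W : V) :
    star (tens (coordC b X) (coordC b Y)) ⬝ᵥ
      (curvMat b R *ᵥ tens (coordC b Z) (coordC b W)) = (R X Y Z W : ℂ) := by
  rw [hR.expand_four b]
  simp only [dotProduct, mulVec, Finset.mul_sum]
  push_cast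
  refine Finset.sum_congr rfl fun p _ => Finset.sum_congr rfl fun q _ => ?_
  simp [tens, coordC, curvMat]

theorem curvMat_isHermitian : (curvMat b R).IsHermitian := by
  ext p q
  simp [curvMat, hR.pairSymm (b p.1)]

theorem curvMat_transpose : (curvMat b R)ᵀ = curvMat b R := by
  ext p q
  simp [curvMat, hR.pairSymm (b p.1)]

theorem curvMat_swap (p q : ι × ι) : curvMat b R p.swap q = - curvMat b R p q := by
  simp [curvMat, hR.antisymm (b p.1)]

theorem curvMat_swap' (p q : ι × ι) : curvMat b R p q.swap = - curvMat b R p q := by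
  simp [curvMat, hR.antisymm' (b p.1) _ (b q.1)]

theorem curvMat_mulVec_swap (x : ι × ι → ℂ) :
    curvMat b R *ᵥ (fun p => x p.swap) = - (curvMat b R *ᵥ x) := by
  ext p
  simp only [mulVec, dotProduct, Pi.neg_apply, ← Finset.sum_neg_distrib]
  refine Fintype.sum_equiv (Equiv.prodComm ι ι) _ _ fun q => ?_
  simp only [Equiv.prodComm_apply]
  rw [curvMat_swap' hR b]
  ring

/-- The curvature form only depends on the antisymmetric part of a tensor. -/
theorem quadRe_congr {x x' : ι × ι → ℂ}
    (h : ∀ i j, x (i, j) - x (j, i) = x' (i, j) - x' (j, i)) :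
    quadRe (curvMat b R) x = quadRe (curvMat b R) x' := by
  have h1 : x - (fun p => x p.swap) = x' - (fun p => x' p.swap) := by
    ext ⟨i, j⟩
    exact h i j
  have h2 := congrArg (fun y => curvMat b R *ᵥ y) h1
  simp only [mulVec_sub, curvMat_mulVec_swap hR] at h2
  have h3 : curvMat b R *ᵥ x = curvMat b R *ᵥ x' := by
    ext p
    have := congrFun h2 p
    simp only [Pi.sub_apply, Pi.neg_apply] at this
    linear_combination this / 2
  have h4 : ∀ y : ι × ι → ℂ, star y ⬝ᵥ (curvMat b R *ᵥ x') = star (curvMat b R *ᵥ y) ⬝ᵥ x' := by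
    intro y
    rw [star_mulVec, (curvMat_isHermitian hR b).eq, dotProduct_mulVec]
  rw [quadRe, h3, h4, h3, ← h4, quadRe]

/-- On decomposable isotropic bivectors the complex curvature form is the isotropic curvature. The
identity holds for arbitrary vectors, by the first Bianchi identity. -/
theorem quadRe_tens (X Y X' Y' : V) :
    quadRe (curvMat b R) (tens (coordC b X + Complex.I • coordC b Y)
      (coordC b X' + Complex.I • coordC b Y')) = isoCurv R X Y X' Y' := by
  simp only [quadRe, tens_add_left, tens_add_right, tens_smul_left, tens_smul_right, mulVec_add,
    mulVec_smul, star_add, star_smul, add_dotProduct, dotProduct_add, smul_dotProduct,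
    dotProduct_smul, curvMat_tens hR, smul_eq_mul, Complex.star_def, Complex.conj_I]
  simp
  rw [isoCurv, hR.eq_sub X Y X' Y', hR.pairSymm Y X' X Y', hR.pairSymm Y Y' X X']
  ring

theorem quadRe_tens_nonneg_of_orthogonal (hnn : NonnegIsotropic R) (z w : ι → ℂ)
    (hzz : z ⬝ᵥ z = 0) (hww : w ⬝ᵥ w = 0) (hzw : z ⬝ᵥ w = 0) (h : star z ⬝ᵥ w = 0) :
    0 ≤ quadRe (curvMat b R) (tens z w) := by
  obtain ⟨X, Y, rfl⟩ := exists_coordC b z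
  obtain ⟨X', Y', rfl⟩ := exists_coordC b w
  simp only [star_add, star_smul, star_coordC, add_dotProduct, dotProduct_add, smul_dotProduct,
    dotProduct_smul, coordC_dot, Complex.ext_iff, smul_eq_mul, Complex.star_def,
    Complex.conj_I] at hzz hww hzw h
  simp [real_inner_comm X Y, real_inner_comm X' Y', -Complex.ofReal_pow] at hzz hww hzw h
  obtain ⟨a1, a2⟩ := hzz
  obtain ⟨b1, b2⟩ := hww
  obtain ⟨c1, c2⟩ := hzw
  obtain ⟨d1, d2⟩ := h
  rw [quadRe_tens hR]
  have e1 := real_inner_self_eq_norm_sq X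
  have e2 := real_inner_self_eq_norm_sq Y
  have e3 := real_inner_self_eq_norm_sq X'
  have e4 := real_inner_self_eq_norm_sq Y'
  apply isoCurv_nonneg_of_conformal hR hnn <;> linarith

/-- Nonnegative isotropic curvature, for arbitrary pairs `z, w` of complex vectors spanning a
totally isotropic subspace. -/
theorem quadRe_tens_nonneg (hnn : NonnegIsotropic R) (z w : ι → ℂ) (hzz : z ⬝ᵥ z = 0)
    (hww : w ⬝ᵥ w = 0) (hzw : z ⬝ᵥ w = 0) : 0 ≤ quadRe (curvMat b R) (tens z w) := by
  by_cases hz : z = 0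
  · subst hz
    have : tens (0 : ι → ℂ) w = 0 := by ext; simp [tens]
    simp [this, quadRe]
  have hn : star z ⬝ᵥ z ≠ 0 := fun h => hz (dotProduct_star_self_eq_zero.1 h)
  -- a Gram-Schmidt step, which changes `z ⊗ w` by a multiple of the symmetric tensor `z ⊗ z`
  set c := (star z ⬝ᵥ w) / (star z ⬝ᵥ z) with hc
  have h := quadRe_tens_nonneg_of_orthogonal hR b hnn z (w + (-c) • z) hzz
    (by simp [hww, hzw, hzz, dotProduct_comm w z]) (by simp [hzw, hzz])
    (by rw [dotProduct_add, dotProduct_smul, smul_eq_mul, hc, neg_mul, div_mul_cancel₀ _ hn,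
          add_neg_cancel])
  rwa [quadRe_congr hR b (x' := tens z w)] at h
  intro i j
  simp [tens]
  ring

/-- The second variation inequality for the first order variations
`(a + s • star w, v - s • star z)`, where `a` and `v` are orthogonal to the span of `z`, `w` and
their conjugates; the parameter `c` records a rescaling. These variations extend to an exact
polynomial path of totally isotropic pairs. -/
theorem quadRe_variation_nonneg_aux (hnn : NonnegIsotropic R) (z w a v : ι → ℂ) (s c : ℂ)
    (hzz : z ⬝ᵥ z = 0) (hww : w ⬝ᵥ w = 0) (hzw : z ⬝ᵥ w = 0)
    (hzz' : z ⬝ᵥ star z = 2) (hww' : w ⬝ᵥ star w = 2) (hzw' : z ⬝ᵥ star w = 0)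
    (h0 : quadRe (curvMat b R) (tens z w) = 0)
    (haz : a ⬝ᵥ z = 0) (haw : a ⬝ᵥ w = 0) (haz' : a ⬝ᵥ star z = 0) (haw' : a ⬝ᵥ star w = 0)
    (hvz : v ⬝ᵥ z = 0) (hvw : v ⬝ᵥ w = 0) (hvz' : v ⬝ᵥ star z = 0) (hvw' : v ⬝ᵥ star w = 0) :
    0 ≤ quadRe (curvMat b R) (tens (a + s • star w) w + tens z (v - s • star z)
      + c • tens z w) := by
  set y := a + s • star w with hy
  set u := v - s • star z with hu
  set z2 := (-(a ⬝ᵥ a) / 4) • star z with hz2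
  set w2 := (-(a ⬝ᵥ v) / 2) • star z + (-(v ⬝ᵥ v) / 4) • star w with hw2
  have hwz' : w ⬝ᵥ star z = 0 := by rw [dotProduct_star, hzw', star_zero]
  have s1 : star z ⬝ᵥ star z = 0 := by rw [star_dotProduct_star, hzz, star_zero]
  have s2 : star w ⬝ᵥ star w = 0 := by rw [star_dotProduct_star, hww, star_zero]
  have s3 : star z ⬝ᵥ star w = 0 := by
    rw [star_dotProduct_star, dotProduct_comm, hzw, star_zero]
  -- the path `(1 + c τ) (z + τ y + τ ^ 2 z2) ⊗ (w + τ u + τ ^ 2 w2)`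
  refine (quadRe_nonneg_of_family (curvMat b R) (tens z w) _
    (tens z2 w + tens y u + tens z w2 + c • (tens y w + tens z u))
    (tens z2 u + tens y w2 + c • (tens z2 w + tens y u + tens z w2))
    (tens z2 w2 + c • (tens z2 u + tens y w2))
    (c • tens z2 w2) h0 ?_)
  intro τ
  have key := quadRe_tens_nonneg hR b hnn ((1 + c * τ) • (z + τ • y + τ ^ 2 • z2))
    (w + τ • u + τ ^ 2 • w2) ?_ ?_ ?_
  · convert key using 2
    ext i
    simp only [tens, Pi.add_apply, Pi.smul_apply, smul_eq_mul]
    ring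
  all_goals
    simp only [hy, hu, hz2, hw2, add_dotProduct, dotProduct_add, sub_dotProduct, dotProduct_sub,
      smul_dotProduct, dotProduct_smul, smul_eq_mul, hzz, hww, hzw, hzz', hww', hzw', hwz',
      s1, s2, s3, haz, haw, haz', haw', hvz, hvw, hvz', hvw',
      dotProduct_comm z a, dotProduct_comm z v,
      dotProduct_comm w v, dotProduct_comm (star z) z, dotProduct_comm (star z) w,
      dotProduct_comm (star w) z, dotProduct_comm (star w) w, dotProduct_comm (star z) a,
      dotProduct_comm (star w) a, dotProduct_comm (star z) v, dotProduct_comm (star w) v,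
      dotProduct_comm (star w) (star z)]
    ring

/-- The second variation inequality: at a totally isotropic pair `(z, w)` of vanishing isotropic
curvature, the curvature form is nonnegative on all tangent directions `y ⊗ w + z ⊗ v`, where
`(y, v)` is tangent to the space of totally isotropic pairs. -/
theorem quadRe_variation_nonneg (hnn : NonnegIsotropic R) (z w y v : ι → ℂ)
    (hzz : z ⬝ᵥ z = 0) (hww : w ⬝ᵥ w = 0) (hzw : z ⬝ᵥ w = 0)
    (hzz' : z ⬝ᵥ star z = 2) (hww' : w ⬝ᵥ star w = 2) (hzw' : z ⬝ᵥ star w = 0)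
    (h0 : quadRe (curvMat b R) (tens z w) = 0)
    (hyz : y ⬝ᵥ z = 0) (hvw : v ⬝ᵥ w = 0) (hyv : y ⬝ᵥ w + v ⬝ᵥ z = 0) :
    0 ≤ quadRe (curvMat b R) (tens y w + tens z v) := by
  have hwz' : w ⬝ᵥ star z = 0 := by rw [dotProduct_star, hzw', star_zero]
  have s1 : star z ⬝ᵥ star z = 0 := by rw [star_dotProduct_star, hzz, star_zero]
  have s2 : star w ⬝ᵥ star w = 0 := by rw [star_dotProduct_star, hww, star_zero]
  have s3 : star z ⬝ᵥ star w = 0 := by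
    rw [star_dotProduct_star, dotProduct_comm, hzw, star_zero]
  have hvz : v ⬝ᵥ z = - (y ⬝ᵥ w) := by linear_combination hyv
  set s := y ⬝ᵥ w / 2 with hs
  set α := y ⬝ᵥ star z / 2 with hα
  set β := y ⬝ᵥ star w / 2 with hβ
  set γ := v ⬝ᵥ star z / 2 with hγ
  set δ := v ⬝ᵥ star w / 2 with hδ
  have key := quadRe_variation_nonneg_aux hR b hnn z w (y - s • star w - α • z - β • w)
    (v + s • star z - γ • z - δ • w) s (α + δ) hzz hww hzw hzz' hww' hzw' h0
    ?_ ?_ ?_ ?_ ?_ ?_ ?_ ?_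
  · rwa [quadRe_congr hR b (x' := tens y w + tens z v)] at key
    intro i j
    simp only [tens, Pi.add_apply, Pi.sub_apply, Pi.smul_apply, smul_eq_mul]
    ring
  all_goals
    simp only [hs, hα, hβ, hγ, hδ, add_dotProduct, sub_dotProduct, smul_dotProduct, smul_eq_mul,
      hzz, hww, hzw, hzz', hww', hzw', hwz', s1, s2, s3, hyz, hvw, hvz,
      dotProduct_comm w z, dotProduct_comm (star z) z, dotProduct_comm (star z) w,
      dotProduct_comm (star w) z, dotProduct_comm (star w) w, dotProduct_comm (star w) (star z)]
    ring

end Complexification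

/-! ### The commutator with an isotropic bivector -/

section Commutator

open Matrix ComplexOrder Kronecker

variable {ι : Type*} [Fintype ι] [DecidableEq ι]

/-- The skew-symmetric matrix of the bivector `z ∧ w`. -/
def wedgeMat (z w : ι → ℂ) : Matrix ι ι ℂ := vecMulVec z w - vecMulVec w z

/-- The permutation matrix of the flip `u ⊗ v ↦ v ⊗ u`. -/
def flipMat (ι : Type*) [DecidableEq ι] : Matrix (ι × ι) (ι × ι) ℂ :=
  Matrix.of fun p q => if p.swap = q then 1 else 0

/-- Left multiplication `T ↦ ω T` by `ω = z ∧ w`, on tensors `T` viewed as square matrices. -/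
def leftMat (z w : ι → ℂ) : Matrix (ι × ι) (ι × ι) ℂ := wedgeMat z w ⊗ₖ (1 : Matrix ι ι ℂ)

/-- The commutator `T ↦ ω T - T ω` with `ω = z ∧ w`. Right multiplication by `ω = - ωᵀ` is,
up to sign, left multiplication conjugated by the flip. -/
def adMat (z w : ι → ℂ) : Matrix (ι × ι) (ι × ι) ℂ :=
  leftMat z w + flipMat ι * leftMat z w * flipMat ι

theorem flipMat_mulVec (x : ι × ι → ℂ) : flipMat ι *ᵥ x = fun p => x p.swap := by
  ext p
  simp [flipMat, mulVec, dotProduct]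

omit [Fintype ι] in
theorem flipMat_transpose : (flipMat ι)ᵀ = flipMat ι := by
  ext p q
  simp only [flipMat, transpose_apply, of_apply]
  congr 1
  exact propext ⟨fun h => by rw [← h, Prod.swap_swap], fun h => by rw [← h, Prod.swap_swap]⟩

omit [Fintype ι] in
theorem flipMat_conjTranspose : (flipMat ι)ᴴ = flipMat ι := by
  rw [conjTranspose, flipMat_transpose]
  ext p q
  simp [flipMat, apply_ite]

theorem adMat_transpose (z w : ι → ℂ) : (adMat z w)ᵀ = - adMat z w := by
  have h : (leftMat z w)ᵀ = - leftMat z w := by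
    ext p q
    simp only [leftMat, wedgeMat, transpose_apply, kroneckerMap_apply, Matrix.sub_apply,
      vecMulVec_apply, Matrix.neg_apply, one_apply, @eq_comm _ q.2 p.2]
    ring
  simp only [adMat, transpose_add, transpose_mul, flipMat_transpose, h]
  noncomm_ring

theorem leftMat_mulVec (z w : ι → ℂ) (T : Matrix ι ι ℂ) (i j : ι) :
    (leftMat z w *ᵥ fun p => T p.1 p.2) (i, j) = z i * (w ᵥ* T) j - w i * (z ᵥ* T) j := by
  simp only [leftMat, wedgeMat, mulVec, dotProduct, vecMul, kroneckerMap_apply, Fintype.sum_prod_type,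
    one_apply, mul_ite, mul_one, mul_zero, ite_mul, zero_mul, Finset.sum_ite_eq, Finset.mem_univ,
    if_true, Matrix.sub_apply, vecMulVec_apply, Finset.mul_sum, ← Finset.sum_sub_distrib]
  exact Finset.sum_congr rfl fun k _ => by ring

theorem adMat_mulVec (z w : ι → ℂ) (T : Matrix ι ι ℂ) (i j : ι) :
    (adMat z w *ᵥ fun p => T p.1 p.2) (i, j) =
      z i * (w ᵥ* T) j - w i * (z ᵥ* T) j + (z j * (T *ᵥ w) i - w j * (T *ᵥ z) i) := by
  rw [adMat, add_mulVec, ← mulVec_mulVec, ← mulVec_mulVec, flipMat_mulVec, flipMat_mulVec,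
    Pi.add_apply, leftMat_mulVec]
  have := leftMat_mulVec z w Tᵀ j i
  simp only [vecMul_transpose] at this
  rw [← this]
  rfl

variable {R : V → V → V → V → ℝ} (hR : IsAlgCurvTensor R) (b : OrthonormalBasis ι ℝ V)

section
include hR

/-- The second variation inequality in terms of the infinitesimal action of the complex orthogonal
Lie algebra: the curvature form is nonnegative on all brackets with `z ∧ w`. -/
theorem quadRe_adMat_nonneg (hnn : NonnegIsotropic R) (z w : ι → ℂ)
    (hzz : z ⬝ᵥ z = 0) (hww : w ⬝ᵥ w = 0) (hzw : z ⬝ᵥ w = 0)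
    (hzz' : z ⬝ᵥ star z = 2) (hww' : w ⬝ᵥ star w = 2) (hzw' : z ⬝ᵥ star w = 0)
    (h0 : quadRe (curvMat b R) (tens z w) = 0) (x : ι × ι → ℂ) :
    0 ≤ quadRe (curvMat b R) (adMat z w *ᵥ x) := by
  set T : Matrix ι ι ℂ := Matrix.of fun i j => x (i, j) with hT
  have hx : x = fun p => T p.1 p.2 := rfl
  have key := quadRe_variation_nonneg hR b hnn z w (z ᵥ* T - T *ᵥ z) (w ᵥ* T - T *ᵥ w)
    hzz hww hzw hzz' hww' hzw' h0
    (by rw [sub_dotProduct, ← dotProduct_mulVec, dotProduct_comm (T *ᵥ z), sub_self])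
    (by rw [sub_dotProduct, ← dotProduct_mulVec, dotProduct_comm (T *ᵥ w), sub_self])
    (by rw [sub_dotProduct, sub_dotProduct, ← dotProduct_mulVec, ← dotProduct_mulVec,
          dotProduct_comm (T *ᵥ w), dotProduct_comm (T *ᵥ z)]; ring)
  rwa [quadRe_congr hR b (x' := adMat z w *ᵥ x)] at key
  intro i j
  rw [hx, adMat_mulVec, adMat_mulVec]
  simp only [tens, Pi.add_apply, Pi.sub_apply]
  ring

/-- The trace inequality behind the theorem: with `L = adMat z w` and `M = curvMat b R`, the second
variation inequality says that `Lᴴ M L` is positive semidefinite, and then so is `L M Lᴴ`, since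
`L` is skew-symmetric and `M` is real symmetric. -/
theorem trace_adMat_nonneg (hnn : NonnegIsotropic R) (z w : ι → ℂ)
    (hzz : z ⬝ᵥ z = 0) (hww : w ⬝ᵥ w = 0) (hzw : z ⬝ᵥ w = 0)
    (hzz' : z ⬝ᵥ star z = 2) (hww' : w ⬝ᵥ star w = 2) (hzw' : z ⬝ᵥ star w = 0)
    (h0 : quadRe (curvMat b R) (tens z w) = 0) :
    0 ≤ ((adMat z w)ᴴ * curvMat b R * adMat z w * curvMat b R).trace := by
  have hP : ((adMat z w)ᴴ * curvMat b R * adMat z w).PosSemidef := by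
    refine PosSemidef.of_dotProduct_mulVec_nonneg
      (isHermitian_conjTranspose_mul_mul _ (curvMat_isHermitian hR b)) fun x => ?_
    rw [dot_conj_mulVec, Complex.nonneg_iff]
    exact ⟨quadRe_adMat_nonneg hR b hnn z w hzz hww hzw hzz' hww' hzw' h0 x,
      ((curvMat_isHermitian hR b).im_star_dotProduct_mulVec_self _).symm⟩
  refine trace_nonneg_of_posSemidef hP ?_
  -- the second form is the transpose of the first one
  have h := hP.transpose
  have h1 : ((adMat z w)ᴴ)ᵀ = -(adMat z w)ᴴ := by
    rw [← conjTranspose_neg, ← adMat_transpose]; rfl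
  rw [transpose_mul, transpose_mul, curvMat_transpose hR, adMat_transpose, h1] at h
  simpa [mul_assoc] using h

theorem curvMat_mul_flipMat : curvMat b R * flipMat ι = - curvMat b R := by
  ext p q
  have h : ∀ r : ι × ι, (r.swap = q) = (r = q.swap) := fun r => propext
    ⟨fun h => by rw [← h, Prod.swap_swap], fun h => by rw [h, Prod.swap_swap]⟩
  simp only [mul_apply, flipMat, of_apply, h, mul_ite, mul_one, mul_zero, Finset.sum_ite_eq',
    Finset.mem_univ, if_true, Matrix.neg_apply]
  exact curvMat_swap' hR b p q

theorem flipMat_mul_curvMat : flipMat ι * curvMat b R = - curvMat b R := by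
  have := congrArg transpose (curvMat_mul_flipMat hR b)
  rwa [transpose_mul, transpose_neg, curvMat_transpose hR, flipMat_transpose] at this

/-- Since `M` annihilates symmetric tensors, the left and the right multiplication part of the
commutator contribute equally to the trace. -/
theorem trace_adMat_eq (z w : ι → ℂ) :
    ((adMat z w)ᴴ * curvMat b R * adMat z w * curvMat b R).trace =
      4 * ((leftMat z w)ᴴ * curvMat b R * leftMat z w * curvMat b R).trace := by
  set M := curvMat b R with hM
  set K := leftMat z w
  set S := flipMat ι
  have h1 : M * S = -M := curvMat_mul_flipMat hR b
  have h2 : S * M = -M := flipMat_mul_curvMat hR b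
  have h3 : adMat z w * M = K * M - S * (K * M) := by
    rw [adMat, add_mul, mul_assoc, h2]; simp only [mul_assoc, mul_neg, sub_eq_add_neg]; rfl
  have h4 : (adMat z w)ᴴ * M = Kᴴ * M - S * (Kᴴ * M) := by
    rw [adMat, conjTranspose_add, conjTranspose_mul, conjTranspose_mul, flipMat_conjTranspose,
      add_mul, mul_assoc, mul_assoc, h2]
    simp only [mul_neg, sub_eq_add_neg]; rfl
  have h5 : ∀ X : Matrix (ι × ι) (ι × ι) ℂ, (S * (X * M)).trace = - (X * M).trace := by
    intro X
    rw [trace_mul_comm, mul_assoc, h1, mul_neg, trace_neg]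
  have h6 : Kᴴ * M * (S * (K * M)) = - (Kᴴ * M * K * M) := by
    rw [← mul_assoc, mul_assoc Kᴴ, h1]; simp only [mul_assoc, mul_neg, neg_mul]
  have h7 : Kᴴ * M * (K * M) = Kᴴ * M * K * M := by rw [← mul_assoc]
  rw [mul_assoc, h3, h4, sub_mul, mul_sub, mul_sub, h6, h7, mul_assoc S, h7, mul_assoc S, h6,
    trace_sub, trace_sub, trace_sub, mul_neg, trace_neg, trace_neg, h5]
  ring

end

/-- The matrix, in the basis `b`, of the bilinear form `(U, W) ↦ R(U, b p, W, b q)`. -/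
noncomputable def sliceMat (R : V → V → V → V → ℝ) (p q : ι) : Matrix ι ι ℂ :=
  Matrix.of fun i j => (R (b i) (b p) (b j) (b q) : ℂ)

/-- Regrouping the four summation indices of the trace into the second components `p, q` of the
index pairs, which `leftMat` leaves fixed, and the first components. -/
theorem trace_leftMat_eq (z w : ι → ℂ) :
    ((leftMat z w)ᴴ * curvMat b R * leftMat z w * curvMat b R).trace =
      ∑ p, ∑ q, (sliceMat b R p q * wedgeMat z w * sliceMat b R q p * (wedgeMat z w)ᴴ).trace := by
  have h1 : ∀ (r : ι × ι) (k l : ι), (curvMat b R * leftMat z w) r (k, l) =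
      ∑ c, curvMat b R r (c, l) * wedgeMat z w c k := by
    intro r k l
    simp [mul_apply, leftMat, Fintype.sum_prod_type, one_apply]
  have h2 : ∀ (r : ι × ι) (i j : ι), (curvMat b R * (leftMat z w)ᴴ) r (i, j) =
      ∑ d, curvMat b R r (d, j) * (wedgeMat z w)ᴴ d i := by
    intro r i j
    simp [mul_apply, leftMat, Fintype.sum_prod_type, one_apply, apply_ite]
  rw [mul_assoc, mul_assoc, trace_mul_comm, ← mul_assoc, mul_assoc (_ * _), trace]
  simp only [diag_apply, mul_apply (M := curvMat b R * leftMat z w), Fintype.sum_prod_type, h1, h2]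
  rw [Finset.sum_comm]
  refine Finset.sum_congr rfl fun p _ => ?_
  have h3 : ∀ q, (sliceMat b R p q * wedgeMat z w * sliceMat b R q p * (wedgeMat z w)ᴴ).trace =
      ∑ i, ∑ k, (sliceMat b R p q * wedgeMat z w) i k *
        (sliceMat b R q p * (wedgeMat z w)ᴴ) k i := by
    intro q
    rw [mul_assoc, trace]
    rfl
  simp only [h3]
  rw [eq_comm, Finset.sum_comm]
  refine Finset.sum_congr rfl fun i _ => ?_
  rw [Finset.sum_comm]
  refine Finset.sum_congr rfl fun k _ => Finset.sum_congr rfl fun q _ => ?_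
  simp only [mul_apply]
  rfl

omit [DecidableEq ι] in
/-- For the bivector `ω = z ∧ w`, the trace `tr (X ω Y ωᴴ)` only involves the values of the
bilinear forms `X` and `Y` on `z`, `w` and their conjugates. -/
theorem trace_slice (X Y : Matrix ι ι ℂ) (z w : ι → ℂ) :
    (X * wedgeMat z w * Y * (wedgeMat z w)ᴴ).trace =
      (star z ⬝ᵥ X *ᵥ z) * (w ⬝ᵥ Y *ᵥ star w) - (star w ⬝ᵥ X *ᵥ z) * (w ⬝ᵥ Y *ᵥ star z)
      - (star z ⬝ᵥ X *ᵥ w) * (z ⬝ᵥ Y *ᵥ star w) + (star w ⬝ᵥ X *ᵥ w) * (z ⬝ᵥ Y *ᵥ star z) := by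
  have h : ∀ u v s t : ι → ℂ, (X * vecMulVec u v * (Y * vecMulVec s t)).trace =
      (t ⬝ᵥ X *ᵥ u) * (v ⬝ᵥ Y *ᵥ s) := by
    intro u v s t
    rw [mul_vecMulVec, mul_vecMulVec, vecMulVec_mul_vecMulVec, trace_vecMulVec,
      dotProduct_smul, smul_eq_mul, mul_comm, dotProduct_comm t]
  rw [mul_assoc, wedgeMat, conjTranspose_sub, conjTranspose_vecMulVec, conjTranspose_vecMulVec]
  simp only [mul_sub, sub_mul, trace_sub, h]
  ring

include hR in
omit [DecidableEq ι] in
theorem sliceMat_coordC (p q : ι) (X Y : V) :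
    coordC b X ⬝ᵥ (sliceMat b R p q *ᵥ coordC b Y) = (R X (b p) Y (b q) : ℂ) := by
  rw [hR.expand_one b X]
  simp only [dotProduct, mulVec, Finset.mul_sum]
  push_cast
  refine Finset.sum_congr rfl fun i _ => ?_
  rw [hR.pairSymm, hR.expand_one b Y]
  push_cast
  rw [Finset.mul_sum]
  refine Finset.sum_congr rfl fun j _ => ?_
  rw [hR.pairSymm]
  simp only [coordC, sliceMat, of_apply]
  ring

end Commutator

/-! ### The quadratic expression `Q(R)` -/

section Reaction

open Matrix

variable [FiniteDimensional ℝ V] {R : V → V → V → V → ℝ} (hR : IsAlgCurvTensor R)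

/-- `Q(R) = B(R, R)` as a single double sum. -/
theorem Qop_eq_sum (X Y Z W : V) : Qop R X Y Z W =
    ∑ p, ∑ q, (R X Y (stdOrthonormalBasis ℝ V p) (stdOrthonormalBasis ℝ V q)
        * R Z W (stdOrthonormalBasis ℝ V p) (stdOrthonormalBasis ℝ V q)
      + 2 * (R X (stdOrthonormalBasis ℝ V p) Z (stdOrthonormalBasis ℝ V q)
        * R Y (stdOrthonormalBasis ℝ V p) W (stdOrthonormalBasis ℝ V q))
      - 2 * (R X (stdOrthonormalBasis ℝ V p) W (stdOrthonormalBasis ℝ V q)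
        * R Y (stdOrthonormalBasis ℝ V p) Z (stdOrthonormalBasis ℝ V q))) := by
  simp only [Qop, Bop, Finset.mul_sum, ← Finset.sum_add_distrib, ← Finset.sum_sub_distrib]
  refine Finset.sum_congr rfl fun p _ => Finset.sum_congr rfl fun q _ => ?_
  ring

theorem sum_sum_eq_of_symm {ι : Type*} [Fintype ι] {f g : ι → ι → ℝ}
    (h : ∀ p q, f p q + f q p = g p q + g q p) : ∑ p, ∑ q, f p q = ∑ p, ∑ q, g p q := by
  have h1 : ∀ f : ι → ι → ℝ, ∑ p, ∑ q, (f p q + f q p) = 2 * ∑ p, ∑ q, f p q := by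
    intro f
    simp only [Finset.sum_add_distrib]
    rw [Finset.sum_comm (f := fun p q => f q p)]
    ring
  have h2 := h1 f
  simp only [h, h1] at h2
  linarith

include hR in
/-- The isotropic curvature expression of `Q(R)` is a sum of squares (from the part `R ²`) plus the
real part of a trace (from the part `R #`), by the first Bianchi identity. The summands only agree
after symmetrization in `p` and `q`. -/
theorem isoCurv_Qop (e₁ e₂ e₃ e₄ : V) : isoCurv (Qop R) e₁ e₂ e₃ e₄ =
    ∑ p, ∑ q, ((R e₁ e₃ (stdOrthonormalBasis ℝ V p) (stdOrthonormalBasis ℝ V q)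
          - R e₂ e₄ (stdOrthonormalBasis ℝ V p) (stdOrthonormalBasis ℝ V q)) ^ 2
        + (R e₁ e₄ (stdOrthonormalBasis ℝ V p) (stdOrthonormalBasis ℝ V q)
          + R e₂ e₃ (stdOrthonormalBasis ℝ V p) (stdOrthonormalBasis ℝ V q)) ^ 2)
      + (∑ p, ∑ q, (sliceMat (stdOrthonormalBasis ℝ V) R p q *
          wedgeMat (coordC (stdOrthonormalBasis ℝ V) e₁
              + Complex.I • coordC (stdOrthonormalBasis ℝ V) e₂)
            (coordC (stdOrthonormalBasis ℝ V) e₃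
              + Complex.I • coordC (stdOrthonormalBasis ℝ V) e₄) *
          sliceMat (stdOrthonormalBasis ℝ V) R q p *
          (wedgeMat (coordC (stdOrthonormalBasis ℝ V) e₁
              + Complex.I • coordC (stdOrthonormalBasis ℝ V) e₂)
            (coordC (stdOrthonormalBasis ℝ V) e₃
              + Complex.I • coordC (stdOrthonormalBasis ℝ V) e₄))ᴴ).trace).re := by
  set b := stdOrthonormalBasis ℝ V with hb
  simp only [isoCurv, Qop_eq_sum, Complex.re_sum, Finset.mul_sum, ← Finset.sum_add_distrib,
    ← Finset.sum_sub_distrib]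
  refine sum_sum_eq_of_symm fun p q => ?_
  simp only [← hb, trace_slice, star_add, star_smul, star_coordC, mulVec_add, mulVec_smul,
    add_dotProduct, smul_dotProduct, dotProduct_add, dotProduct_smul, sliceMat_coordC hR,
    smul_eq_mul, Complex.star_def, Complex.conj_I, Complex.add_re, Complex.sub_re, Complex.mul_re,
    Complex.add_im, Complex.mul_im, Complex.neg_re, Complex.neg_im, Complex.I_re,
    Complex.I_im, Complex.ofReal_re, Complex.ofReal_im]
  generalize b p = P
  generalize b q = Q
  simp only [hR.eq_sub e₁ e₂ P Q, hR.eq_sub e₁ e₂ Q P, hR.eq_sub e₁ e₃ P Q, hR.eq_sub e₁ e₃ Q P,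
    hR.eq_sub e₁ e₄ P Q, hR.eq_sub e₁ e₄ Q P, hR.eq_sub e₂ e₃ P Q, hR.eq_sub e₂ e₃ Q P,
    hR.eq_sub e₂ e₄ P Q, hR.eq_sub e₂ e₄ Q P, hR.eq_sub e₃ e₄ P Q, hR.eq_sub e₃ e₄ Q P]
  have h : ∀ X Y, R X Q Y P = R Y P X Q := fun X Y => hR.pairSymm _ _ _ _
  simp only [h]
  ring

end Reaction

theorem nonneg_isotropic_Q_nonneg [FiniteDimensional ℝ V]
    (hn : 4 ≤ Module.finrank ℝ V)
    (R : V → V → V → V → ℝ) (hR : IsAlgCurvTensor R) (hnn : NonnegIsotropic R)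
    (e₁ e₂ e₃ e₄ : V) (he : Orthonormal ℝ ![e₁, e₂, e₃, e₄])
    (hzero : R e₁ e₃ e₁ e₃ + R e₁ e₄ e₁ e₄ + R e₂ e₃ e₂ e₃ + R e₂ e₄ e₂ e₄
        - 2 * R e₁ e₂ e₃ e₄ = 0) :
    0 ≤ Qop R e₁ e₃ e₁ e₃ + Qop R e₁ e₄ e₁ e₄ + Qop R e₂ e₃ e₂ e₃
        + Qop R e₂ e₄ e₂ e₄ - 2 * Qop R e₁ e₂ e₃ e₄ := by
  have hi : ∀ i j : Fin 4, ⟪![e₁, e₂, e₃, e₄] i, ![e₁, e₂, e₃, e₄] j⟫ = if i = j then (1 : ℝ) else 0 :=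
    orthonormal_iff_ite.1 he
  have h11 : ⟪e₁, e₁⟫ = 1 := by simpa using hi 0 0
  have h12 : ⟪e₁, e₂⟫ = 0 := by simpa using hi 0 1
  have h13 : ⟪e₁, e₃⟫ = 0 := by simpa using hi 0 2
  have h14 : ⟪e₁, e₄⟫ = 0 := by simpa using hi 0 3
  have h21 : ⟪e₂, e₁⟫ = 0 := by simpa using hi 1 0
  have h22 : ⟪e₂, e₂⟫ = 1 := by simpa using hi 1 1
  have h23 : ⟪e₂, e₃⟫ = 0 := by simpa using hi 1 2
  have h24 : ⟪e₂, e₄⟫ = 0 := by simpa using hi 1 3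
  have h33 : ⟪e₃, e₃⟫ = 1 := by simpa using hi 2 2
  have h34 : ⟪e₃, e₄⟫ = 0 := by simpa using hi 2 3
  have h43 : ⟪e₄, e₃⟫ = 0 := by simpa using hi 3 2
  have h44 : ⟪e₄, e₄⟫ = 1 := by simpa using hi 3 3
  set b := stdOrthonormalBasis ℝ V with hb
  have h0 : quadRe (curvMat b R) (tens (coordC b e₁ + Complex.I • coordC b e₂)
      (coordC b e₃ + Complex.I • coordC b e₄)) = 0 := by
    rw [quadRe_tens hR]; exact hzero
  have htr := trace_adMat_nonneg hR b hnn (coordC b e₁ + Complex.I • coordC b e₂)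
    (coordC b e₃ + Complex.I • coordC b e₄) ?_ ?_ ?_ ?_ ?_ ?_ h0
  · rw [trace_adMat_eq hR, trace_leftMat_eq] at htr
    have hre := (Complex.nonneg_iff.1 htr).1
    have hQ := isoCurv_Qop hR e₁ e₂ e₃ e₄
    rw [← hb] at hQ
    change 0 ≤ isoCurv (Qop R) e₁ e₂ e₃ e₄
    rw [hQ]
    refine add_nonneg (Finset.sum_nonneg fun p _ => Finset.sum_nonneg fun q _ => by positivity) ?_
    rw [Complex.mul_re, Complex.re_ofNat, Complex.im_ofNat, zero_mul, sub_zero] at hre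
    exact nonneg_of_mul_nonneg_right hre four_pos
  all_goals
    simp only [star_add, star_smul, star_coordC, add_dotProduct, dotProduct_add,
      smul_dotProduct, dotProduct_smul, coordC_dot, h11, h12, h13, h14, h21, h22, h23,
      h24, h33, h34, h43, h44, Complex.star_def, Complex.conj_I, smul_eq_mul]
    norm_num
end

section
/- Let V be a finite-dimensional real inner product space and let R_1 be an algebraic curvature tensor on V whose Ricci tensor vanishes. Define the algebraic curvature tensor S on V by S(X,Y,Z,W) = ⟨X,Z⟩⟨Y,W⟩ − ⟨X,W⟩⟨Y,Z⟩. Then B(R_1,S) = 0. -/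
/-!
Write `S` for the curvature tensor of the unit sphere. Each of the three double sums in `B(R₁, S)`
is a contraction of `R₁` against products of inner products of basis vectors.

* In the first sum the contraction substitutes `Z, W` (resp. `X, Y`) for the basis vectors, so it
  yields `R₁(X,Y,Z,W) - R₁(X,Y,W,Z) = 2 R₁(X,Y,Z,W)` and the same with the pairs exchanged.
* In the other two sums the product `⟪Y, W⟫ ⟪e_p, e_q⟫` contracts `R₁` to its Ricci tensor, which
  vanishes, and the remaining product substitutes vectors, giving terms such as `-R₁(X,W,Z,Y)`.

By the symmetries of `R₁` the total is
`2 (R₁(X,Y,Z,W) + R₁(X,W,Y,Z) + R₁(X,Z,W,Y))`, which is zero by the first Bianchi identity.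
The two contractions are `sum_form_mul_sphere` and `sum_curv_mul_sphere`.
-/

open scoped RealInnerProductSpace
open Finset

variable {V : Type*} [NormedAddCommGroup V] [InnerProductSpace ℝ V]

namespace IsAlgCurvTensor

variable {R : V → V → V → V → ℝ}

lemma antisymm_right (h : IsAlgCurvTensor R) (X Y Z W : V) : R X Y Z W = - R X Y W Z := by
  rw [h.pairSymm X Y Z W, h.antisymm Z W X Y, h.pairSymm W Z X Y]

lemma isLinearMap_fst (h : IsAlgCurvTensor R) (Y Z W : V) :
    IsLinearMap ℝ (fun X => R X Y Z W) :=
  ⟨fun X X' => h.addLeft X X' Y Z W, fun c X => h.smulLeft c X Y Z W⟩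

lemma isLinearMap_snd (h : IsAlgCurvTensor R) (X Z W : V) :
    IsLinearMap ℝ (fun Y => R X Y Z W) := by
  have : (fun Y => R X Y Z W) = fun Y => - R Y X Z W := funext fun Y => h.antisymm X Y Z W
  rw [this]
  exact (-((h.isLinearMap_fst X Z W).mk' _)).isLinear

lemma isLinearMap_trd (h : IsAlgCurvTensor R) (X Y W : V) :
    IsLinearMap ℝ (fun Z => R X Y Z W) := by
  simp only [h.pairSymm X Y]
  exact h.isLinearMap_fst W X Y

lemma isLinearMap_fth (h : IsAlgCurvTensor R) (X Y Z : V) :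
    IsLinearMap ℝ (fun W => R X Y Z W) := by
  simp only [h.pairSymm X Y]
  exact h.isLinearMap_snd Z X Y

end IsAlgCurvTensor

/-- Expanding `Z` in an orthonormal basis and applying a linear functional to it. -/
lemma sum_linear_mul_inner {ι : Type*} [Fintype ι] (b : OrthonormalBasis ι ℝ V)
    {f : V → ℝ} (hf : IsLinearMap ℝ f) (Z : V) :
    ∑ p, f (b p) * ⟪Z, b p⟫ = f Z := by
  have h := congrArg (hf.mk' f) (b.sum_repr' Z)
  simp only [map_sum, map_smul, IsLinearMap.mk'_apply, smul_eq_mul] at h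
  rw [← h]
  exact sum_congr rfl fun p _ => by rw [real_inner_comm, mul_comm]

/-- Contracting a bilinear form against `⟪Z, e_p⟫ ⟪W, e_q⟫` evaluates it at `(Z, W)`. -/
lemma sum_bilin_mul_inner_mul_inner {ι : Type*} [Fintype ι] (b : OrthonormalBasis ι ℝ V)
    {T : V → V → ℝ} (h₁ : ∀ Q, IsLinearMap ℝ (fun P => T P Q)) (h₂ : ∀ P, IsLinearMap ℝ (T P))
    (Z W : V) :
    ∑ p, ∑ q, T (b p) (b q) * (⟪Z, b p⟫ * ⟪W, b q⟫) = T Z W := by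
  rw [← sum_linear_mul_inner b (h₁ W) Z]
  refine sum_congr rfl fun p _ => ?_
  rw [← sum_linear_mul_inner b (h₂ (b p)) W, sum_mul]
  exact sum_congr rfl fun q _ => by ring

/-- Contraction of the last two slots of a curvature tensor with the last two slots of the
curvature tensor of the sphere. -/
lemma sum_form_mul_sphere {ι : Type*} [Fintype ι] (b : OrthonormalBasis ι ℝ V)
    {R : V → V → V → V → ℝ} (h : IsAlgCurvTensor R) (X Y Z W : V) :
    ∑ p, ∑ q, R X Y (b p) (b q) * (⟪Z, b p⟫ * ⟪W, b q⟫ - ⟪Z, b q⟫ * ⟪W, b p⟫)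
      = 2 * R X Y Z W := by
  have h₁ := sum_bilin_mul_inner_mul_inner b (T := R X Y)
    (fun Q => h.isLinearMap_trd X Y Q) (fun P => h.isLinearMap_fth X Y P)
  simp only [mul_sub, sum_sub_distrib, h₁]
  simp only [mul_comm ⟪Z, _⟫ ⟪W, _⟫, h₁]
  rw [h.antisymm_right X Y W Z]
  ring

/-- Contraction of the second and fourth slots of a Ricci-flat curvature tensor with those of the
curvature tensor of the sphere: the trace part is a multiple of the Ricci tensor, so only the
substitution term survives. -/
lemma sum_curv_mul_sphere [FiniteDimensional ℝ V]
    {R : V → V → V → V → ℝ} (h : IsAlgCurvTensor R) (hRic : ∀ X Y : V, RicciT R X Y = 0)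
    (X Y Z W : V) :
    ∑ p, ∑ q, R X (stdOrthonormalBasis ℝ V p) Z (stdOrthonormalBasis ℝ V q) *
        (⟪Y, W⟫ * ⟪stdOrthonormalBasis ℝ V p, stdOrthonormalBasis ℝ V q⟫
          - ⟪Y, stdOrthonormalBasis ℝ V q⟫ * ⟪stdOrthonormalBasis ℝ V p, W⟫)
      = - R X W Z Y := by
  have h₁ := sum_bilin_mul_inner_mul_inner (stdOrthonormalBasis ℝ V) (T := fun P Q => R X P Z Q)
    (fun Q => h.isLinearMap_snd X Z Q) (fun P => h.isLinearMap_fth X P Z) W Y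
  have h₂ : ∑ p, ∑ q, R X (stdOrthonormalBasis ℝ V p) Z (stdOrthonormalBasis ℝ V q) *
      (⟪Y, W⟫ * ⟪stdOrthonormalBasis ℝ V p, stdOrthonormalBasis ℝ V q⟫) = 0 := by
    simp only [OrthonormalBasis.inner_eq_ite, mul_ite, mul_one, mul_zero, sum_ite_eq, mem_univ,
      if_true, ← sum_mul]
    have := hRic X Z
    rw [RicciT] at this
    rw [this, zero_mul]
  simp only [mul_sub, sum_sub_distrib, h₂, zero_sub]
  rw [← h₁]
  simp only [real_inner_comm W, mul_comm ⟪Y, _⟫]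

theorem B_ricciFlat_sphere_vanishes [FiniteDimensional ℝ V]
    (R₁ : V → V → V → V → ℝ) (hR₁ : IsAlgCurvTensor R₁)
    (hRic : ∀ X Y : V, RicciT R₁ X Y = 0)
    (S : V → V → V → V → ℝ)
    (hS : S = fun X Y Z W => ⟪X, Z⟫ * ⟪Y, W⟫ - ⟪X, W⟫ * ⟪Y, Z⟫) :
    ∀ X Y Z W : V, Bop R₁ S X Y Z W = 0 := by
  intro X Y Z W
  subst hS
  have hc := sum_curv_mul_sphere hR₁ hRic
  simp only [Bop, sum_add_distrib, sum_form_mul_sphere _ hR₁, hc]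
  have e₁ : R₁ Z W X Y = R₁ X Y Z W := hR₁.pairSymm Z W X Y
  have e₂ : R₁ Y Z W X = R₁ X W Z Y := by
    rw [hR₁.pairSymm, hR₁.antisymm, hR₁.antisymm_right, neg_neg]
  have e₃ : R₁ Y W Z X = R₁ X Z W Y := by
    rw [hR₁.pairSymm, hR₁.antisymm, hR₁.antisymm_right, neg_neg]
  -- Up to the symmetries, this is the Bianchi identity cycling `Y, Z, W` with `X` fixed.
  have hB := hR₁.bianchi Y Z W X
  have e₄ : R₁ Z W Y X = - R₁ X Y Z W := by rw [hR₁.antisymm_right, e₁]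
  have e₅ : R₁ W Y Z X = - R₁ X Z W Y := by rw [hR₁.antisymm, e₃]
  linarith
end

section
/- Let V be a real inner product space of dimension 4m ≥ 8 with a quaternionic structure I, J, K, let R_1 be a hyper-Kähler algebraic curvature tensor on V, and let R_0 be the associated quaternionic curvature tensor. Then B(R_1,R_0) = 0; consequently, for any κ ∈ ℝ the tensor R = R_1 + κR_0 satisfies Q(R) = Q(R_1) + κ²Q(R_0). -/
/-!
Contracting a bilinear form `g` against `R₀` only involves the values of `g` on a few vectors and
the traces `∑ g(e, e)` and `∑ g(e, A e)`, `A ∈ {I, J, K}` (`contract_quatR0_pair` and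
`contract_quatR0_cross`).  When `g` comes from a hyper-Kähler tensor `R`, all these traces vanish:

* for anticommuting `A`, `B`, replacing the orthonormal basis `e` by `B e` changes the sign of
  `∑ R(X, Y, e, A e)`, so this sum is zero (`trace_pair_eq_zero`);
* by the Bianchi identity, `∑ R(X, Y, e, A e) = 2 ∑ R(X, e, Y, A e)`, so the latter vanishes too
  (`trace_cross_eq_zero`);
* since `R` is `A`-invariant, the Ricci tensor is `∑ R(X, e, A Y, A e) = 0` (`ricci_eq_zero`).

Hence the first sum in `B(R, R₀)` equals `2 R(X, Y, Z, W)`, while the other two are combinations of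
the terms `R(X, AY, Z, AW)`.  The Bianchi identity and the skew-symmetry
`R(X, Y, A Z, W) = -R(X, Y, Z, A W)` show that together they contribute `-2 R(X, Y, Z, W)`
(`cross_difference`).  The formula for `Q(R₁ + κ R₀)` follows by bilinearity of `B`, whose mixed
term `2κ B(R₁, R₀)` is zero.
-/

open scoped RealInnerProductSpace
open Finset

variable {V : Type*} [NormedAddCommGroup V] [InnerProductSpace ℝ V]

/-! ### Traces and contractions with `R₀` -/

section Contraction

variable {ι : Type*} [Fintype ι] (b : OrthonormalBasis ι ℝ V)

lemma sum_inner_mul (f : V →ₗ[ℝ] ℝ) (v : V) : ∑ p, f (b p) * ⟪v, b p⟫ = f v := by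
  conv_rhs => rw [← b.sum_repr' v]
  simp [real_inner_comm, mul_comm]

lemma sum_inner_mul_inner (g : V →ₗ[ℝ] V →ₗ[ℝ] ℝ) (u v : V) :
    ∑ p, ∑ q, g (b p) (b q) * (⟪u, b p⟫ * ⟪v, b q⟫) = g u v := by
  rw [← LinearMap.flip_apply g, ← sum_inner_mul b (g.flip v) u]
  refine sum_congr rfl fun p _ => ?_
  rw [LinearMap.flip_apply, ← sum_inner_mul b (g (b p)) v, sum_mul]
  exact sum_congr rfl fun q _ => by ring

lemma sum_inner_apply (g : V →ₗ[ℝ] V →ₗ[ℝ] ℝ) (A : V →ₗ[ℝ] V) :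
    ∑ p, ∑ q, g (b p) (b q) * ⟪A (b p), b q⟫ = ∑ p, g (b p) (A (b p)) :=
  sum_congr rfl fun p _ => sum_inner_mul b (g (b p)) (A (b p))

lemma IsOrthCplx.inner_left {A : V →ₗ[ℝ] V} (hA : IsOrthCplx A) (X Y : V) :
    ⟪A X, Y⟫ = -⟪A Y, X⟫ := by
  have h := hA.2 X (A Y)
  rw [hA.1, inner_neg_right] at h
  rw [real_inner_comm X (A Y)] at *
  linarith

/-- The trace of a bilinear form can be computed in the orthonormal basis `A e`. -/
lemma sum_apply_apply (g : V →ₗ[ℝ] V →ₗ[ℝ] ℝ) {A : V →ₗ[ℝ] V} (hA : IsOrthCplx A) :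
    ∑ p, g (A (b p)) (A (b p)) = ∑ p, g (b p) (b p) := by
  have h1 : ∑ p, g (A (b p)) (A (b p)) = ∑ p, ∑ q, g (b q) (A (b p)) * ⟪A (b p), b q⟫ :=
    sum_congr rfl fun p _ => (sum_inner_mul b (g.flip (A (b p))) (A (b p))).symm
  have h2 : ∀ q, ∑ p, g (b q) (A (b p)) * ⟪A (b p), b q⟫ = g (b q) (b q) := fun q => by
    have h := sum_inner_mul b ((g (b q)).comp A) (A (b q))
    rw [LinearMap.comp_apply, hA.1, map_neg] at h
    rw [← neg_neg (g (b q) (b q)), ← h, ← sum_neg_distrib]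
    refine sum_congr rfl fun p _ => ?_
    rw [hA.inner_left (b p), LinearMap.comp_apply]
    ring
  rw [h1, sum_comm]
  exact sum_congr rfl fun q _ => h2 q

variable {I J K : V →ₗ[ℝ] V}

/-- Contraction of a bilinear form with the last pair of arguments of `R₀`. -/
lemma contract_quatR0_pair (g : V →ₗ[ℝ] V →ₗ[ℝ] ℝ) (Z W : V) :
    ∑ p, ∑ q, g (b p) (b q) * quatR0 I J K Z W (b p) (b q) = (1 / 4) * (g Z W - g W Z
      + 2 * ⟪I Z, W⟫ * ∑ p, g (b p) (I (b p)) + g (I Z) (I W) - g (I W) (I Z)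
      + 2 * ⟪J Z, W⟫ * ∑ p, g (b p) (J (b p)) + g (J Z) (J W) - g (J W) (J Z)
      + 2 * ⟪K Z, W⟫ * ∑ p, g (b p) (K (b p)) + g (K Z) (K W) - g (K W) (K Z)) := by
  have h := fun u v => (sum_inner_mul_inner b g u v).symm
  rw [h Z W, h W Z, h (I Z) (I W), h (I W) (I Z), h (J Z) (J W), h (J W) (J Z), h (K Z) (K W),
    h (K W) (K Z), ← sum_inner_apply b g I, ← sum_inner_apply b g J, ← sum_inner_apply b g K]
  simp only [mul_sum, ← sum_add_distrib, ← sum_sub_distrib]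
  refine sum_congr rfl fun p _ => sum_congr rfl fun q _ => ?_
  rw [quatR0]
  ring

/-- Contraction of a bilinear form with the second and fourth arguments of `R₀`. -/
lemma contract_quatR0_cross (hI : IsOrthCplx I) (hJ : IsOrthCplx J) (hK : IsOrthCplx K)
    (g : V →ₗ[ℝ] V →ₗ[ℝ] ℝ) (Y W : V) :
    ∑ p, ∑ q, g (b p) (b q) * quatR0 I J K Y (b p) W (b q) = (1 / 4) * (
      ⟪Y, W⟫ * ∑ p, g (b p) (b p) - g W Y
      + 2 * g (I Y) (I W) + ⟪I Y, W⟫ * ∑ p, g (b p) (I (b p)) + g (I W) (I Y)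
      + 2 * g (J Y) (J W) + ⟪J Y, W⟫ * ∑ p, g (b p) (J (b p)) + g (J W) (J Y)
      + 2 * g (K Y) (K W) + ⟪K Y, W⟫ * ∑ p, g (b p) (K (b p)) + g (K W) (K Y)) := by
  have hid := sum_inner_apply b g LinearMap.id
  simp only [LinearMap.id_apply] at hid
  have h := fun u v => (sum_inner_mul_inner b g u v).symm
  rw [h W Y, h (I Y) (I W), h (I W) (I Y), h (J Y) (J W), h (J W) (J Y), h (K Y) (K W),
    h (K W) (K Y), ← hid, ← sum_inner_apply b g I, ← sum_inner_apply b g J,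
    ← sum_inner_apply b g K]
  simp only [mul_sum, ← sum_add_distrib, ← sum_sub_distrib]
  refine sum_congr rfl fun p _ => sum_congr rfl fun q _ => ?_
  rw [quatR0, hI.inner_left (b p) W, hJ.inner_left (b p) W, hK.inner_left (b p) W,
    real_inner_comm W (b p)]
  ring

end Contraction

/-! ### Hyper-Kähler curvature tensors -/

section Curvature

variable {R : V → V → V → V → ℝ}

namespace IsAlgCurvTensor

/-- The bilinear form `R(X, Y, ·, ·)`. -/
noncomputable def pairForm (hR : IsAlgCurvTensor R) (X Y : V) : V →ₗ[ℝ] V →ₗ[ℝ] ℝ :=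
  LinearMap.mk₂ ℝ (fun Z W => R X Y Z W)
    (fun Z Z' W => by simp only [hR.pairSymm X Y, hR.addLeft])
    (fun c Z W => by simp only [hR.pairSymm X Y, hR.smulLeft, smul_eq_mul])
    (fun Z W W' => by
      simp only [hR.pairSymm X Y, hR.antisymm Z, hR.addLeft]; ring)
    (fun c Z W => by
      simp only [hR.pairSymm X Y, hR.antisymm Z, hR.smulLeft, smul_eq_mul]; ring)

/-- The bilinear form `R(X, ·, Z, ·)`. -/
noncomputable def crossForm (hR : IsAlgCurvTensor R) (X Z : V) : V →ₗ[ℝ] V →ₗ[ℝ] ℝ :=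
  LinearMap.mk₂ ℝ (fun Y W => R X Y Z W)
    (fun Y Y' W => by simp only [hR.antisymm X, hR.addLeft]; ring)
    (fun c Y W => by simp only [hR.antisymm X, hR.smulLeft, smul_eq_mul]; ring)
    (fun Y W W' => (hR.pairForm X Y Z).map_add W W')
    (fun c Y W => (hR.pairForm X Y Z).map_smul c W)

@[simp] lemma pairForm_apply (hR : IsAlgCurvTensor R) (X Y Z W : V) :
    hR.pairForm X Y Z W = R X Y Z W := rfl

@[simp] lemma crossForm_apply (hR : IsAlgCurvTensor R) (X Y Z W : V) :
    hR.crossForm X Z Y W = R X Y Z W := rfl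

lemma neg_right (hR : IsAlgCurvTensor R) (X Y Z W : V) : R X Y Z (-W) = -R X Y Z W :=
  (hR.pairForm X Y Z).map_neg W

end IsAlgCurvTensor

lemma IsKaehlerTensor.skew {A : V →ₗ[ℝ] V} (hA : IsOrthCplx A) (hR : IsAlgCurvTensor R)
    (hK : IsKaehlerTensor A R) (X Y Z W : V) : R X Y (A Z) W = -R X Y Z (A W) := by
  rw [← hK X Y Z (A W), hA.1, hR.neg_right, neg_neg]

variable {ι : Type*} [Fintype ι] (b : OrthonormalBasis ι ℝ V)

/-- Passing from the basis `e` to `B e` reverses the sign of the trace when `A` and `B`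
anticommute. -/
lemma trace_pair_eq_zero (hR : IsAlgCurvTensor R) {A B : V →ₗ[ℝ] V} (hB : IsOrthCplx B)
    (hBR : IsKaehlerTensor B R) (hAB : ∀ X, A (B X) = -B (A X)) (X Y : V) :
    ∑ p, R X Y (b p) (A (b p)) = 0 := by
  have h := sum_apply_apply b ((hR.pairForm X Y).compl₂ A) hB
  simp only [LinearMap.compl₂_apply, IsAlgCurvTensor.pairForm_apply, hAB,
    hR.neg_right, hBR X Y, sum_neg_distrib] at h
  linarith

lemma trace_cross_eq_zero (hR : IsAlgCurvTensor R) {A : V →ₗ[ℝ] V} (hA : IsOrthCplx A)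
    (hT : ∀ X Y, ∑ p, R X Y (b p) (A (b p)) = 0) (X Y : V) :
    ∑ p, R X (b p) Y (A (b p)) = 0 := by
  -- the trace is skew-symmetric in `X` and `Y`
  have h := sum_apply_apply b ((hR.crossForm X Y).compl₂ A) hA
  simp only [LinearMap.compl₂_apply, IsAlgCurvTensor.crossForm_apply, hA.1,
    hR.neg_right, sum_neg_distrib] at h
  simp only [hR.pairSymm X (A _)] at h
  have hb : ∑ p, R X Y (b p) (A (b p))
      = ∑ p, R X (b p) Y (A (b p)) - ∑ p, R Y (b p) X (A (b p)) := by
    rw [← sum_sub_distrib]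
    refine sum_congr rfl fun p _ => ?_
    linarith [hR.bianchi X Y (b p) (A (b p)), hR.antisymm (b p) X Y (A (b p))]
  linarith [hT X Y]

lemma ricci_eq_zero {A : V →ₗ[ℝ] V} (hAR : IsKaehlerTensor A R)
    (hM : ∀ X Y, ∑ p, R X (b p) Y (A (b p)) = 0) (X Y : V) :
    ∑ p, R X (b p) Y (b p) = 0 := by
  rw [← hM X (A Y)]
  exact sum_congr rfl fun p _ => (hAR _ _ _ _).symm

/-- The contribution of one complex structure `A` to the difference of the two cross terms
of `B(R, R₀)` does not depend on `A`. -/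
lemma cross_difference (hR : IsAlgCurvTensor R) {A : V →ₗ[ℝ] V} (hA : IsOrthCplx A)
    (hAR : IsKaehlerTensor A R) (X Y Z W : V) :
    (2 * R X (A Y) Z (A W) + R X (A W) Z (A Y)) - (2 * R X (A Y) W (A Z) + R X (A Z) W (A Y))
      = R X W Y Z - R X Z Y W := by
  have key : ∀ Z W, R X (A Y) Z (A W) - R X (A W) Z (A Y) = R X Z Y W := fun Z W => by
    linarith [hR.bianchi X (A Y) Z (A W), hR.antisymm (A Y) Z X (A W),
      hR.pairSymm Z (A Y) X (A W), hR.antisymm Z X (A Y) (A W), hAR X Z Y W]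
  have hs : R X (A Y) W (A Z) = R X (A Y) Z (A W) := by
    linarith [hAR.skew hA hR X (A Y) W Z, hR.pairSymm X (A Y) (A W) Z,
      hR.antisymm (A W) Z X (A Y), hR.pairSymm X (A Y) Z (A W)]
  linarith [key Z W, key W Z]

end Curvature

/-! ### The expression `B(R, R₀)` -/

lemma IsQuatStruct.anticomm {I J K : V →ₗ[ℝ] V} (h : IsQuatStruct I J K) :
    (∀ X, I (J X) = -J (I X)) ∧ (∀ X, K (I X) = -I (K X)) := by
  obtain ⟨hI, hJ, hK, hIJK⟩ := h
  have h1 : ∀ X, I (J X) = K X := fun X => by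
    have := hIJK (K X)
    rw [hK.1, map_neg, map_neg] at this
    exact neg_injective this
  have h2 : ∀ X, I (J X) = -J (I X) := fun X => by
    -- `(IJ)² = K² = -1`
    have h3 : I (J (I (J X))) = -X := by rw [h1, h1, hK.1]
    have h4 := congrArg I h3
    rw [hI.1, map_neg] at h4
    have h5 := congrArg J (neg_injective h4)
    rw [hJ.1] at h5
    rw [← h5, neg_neg]
  refine ⟨h2, fun X => ?_⟩
  rw [← h1, ← h1, ← neg_neg (J (I X)), ← h2, map_neg]

lemma Bop_eq_sum [FiniteDimensional ℝ V] (R S : V → V → V → V → ℝ) (X Y Z W : V) :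
    Bop R S X Y Z W =
      (1 / 2) * (∑ p, ∑ q, R X Y (stdOrthonormalBasis ℝ V p) (stdOrthonormalBasis ℝ V q)
            * S Z W (stdOrthonormalBasis ℝ V p) (stdOrthonormalBasis ℝ V q)
          + ∑ p, ∑ q, R Z W (stdOrthonormalBasis ℝ V p) (stdOrthonormalBasis ℝ V q)
            * S X Y (stdOrthonormalBasis ℝ V p) (stdOrthonormalBasis ℝ V q))
        + (∑ p, ∑ q, R X (stdOrthonormalBasis ℝ V p) Z (stdOrthonormalBasis ℝ V q)
            * S Y (stdOrthonormalBasis ℝ V p) W (stdOrthonormalBasis ℝ V q)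
          + ∑ p, ∑ q, R Y (stdOrthonormalBasis ℝ V p) W (stdOrthonormalBasis ℝ V q)
            * S X (stdOrthonormalBasis ℝ V p) Z (stdOrthonormalBasis ℝ V q))
        - (∑ p, ∑ q, R X (stdOrthonormalBasis ℝ V p) W (stdOrthonormalBasis ℝ V q)
            * S Y (stdOrthonormalBasis ℝ V p) Z (stdOrthonormalBasis ℝ V q)
          + ∑ p, ∑ q, R Y (stdOrthonormalBasis ℝ V p) Z (stdOrthonormalBasis ℝ V q)
            * S X (stdOrthonormalBasis ℝ V p) W (stdOrthonormalBasis ℝ V q)) := by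
  simp only [Bop, sum_add_distrib]

lemma Qop_add_mul [FiniteDimensional ℝ V] (R S : V → V → V → V → ℝ) (κ : ℝ) (X Y Z W : V) :
    Qop (fun X Y Z W => R X Y Z W + κ * S X Y Z W) X Y Z W
      = Qop R X Y Z W + 2 * κ * Bop R S X Y Z W + κ ^ 2 * Qop S X Y Z W := by
  simp only [Qop, Bop, mul_sum, ← sum_add_distrib, ← sum_sub_distrib]
  refine sum_congr rfl fun p _ => sum_congr rfl fun q _ => ?_
  ring

lemma Bop_quatR0_eq_zero [FiniteDimensional ℝ V] {I J K : V →ₗ[ℝ] V}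
    (hquat : IsQuatStruct I J K) {R : V → V → V → V → ℝ} (hR : IsAlgCurvTensor R)
    (hHK : IsHyperKaehler I J K R) (X Y Z W : V) : Bop R (quatR0 I J K) X Y Z W = 0 := by
  obtain ⟨hIJ, hKI⟩ := hquat.anticomm
  obtain ⟨hI, hJ, hK, -⟩ := hquat
  obtain ⟨kI, kJ, kK⟩ := hHK
  have hJI : ∀ X, J (I X) = -I (J X) := fun X => by rw [hIJ, neg_neg]
  set b := stdOrthonormalBasis ℝ V with hb
  have tI := trace_pair_eq_zero b hR hJ kJ hIJ
  have tJ := trace_pair_eq_zero b hR hI kI hJI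
  have tK := trace_pair_eq_zero b hR hI kI hKI
  have mI := trace_cross_eq_zero b hR hI tI
  have mJ := trace_cross_eq_zero b hR hJ tJ
  have mK := trace_cross_eq_zero b hR hK tK
  have ric := ricci_eq_zero b kI mI
  have hpair : ∀ X Y Z W, ∑ p, ∑ q, R X Y (b p) (b q) * quatR0 I J K Z W (b p) (b q)
      = 2 * R X Y Z W := fun X Y Z W => by
    have h := contract_quatR0_pair (I := I) (J := J) (K := K) b (hR.pairForm X Y) Z W
    simp only [IsAlgCurvTensor.pairForm_apply, tI, tJ, tK, kI X Y, kJ X Y,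
      kK X Y] at h
    rw [h]
    linarith [hR.pairSymm X Y Z W, hR.antisymm Z W X Y, hR.pairSymm X Y W Z]
  have hcross : ∀ X Y Z W, ∑ p, ∑ q, R X (b p) Z (b q) * quatR0 I J K Y (b p) W (b q)
      = (1 / 4) * (-R X W Z Y + (2 * R X (I Y) Z (I W) + R X (I W) Z (I Y))
        + (2 * R X (J Y) Z (J W) + R X (J W) Z (J Y))
        + (2 * R X (K Y) Z (K W) + R X (K W) Z (K Y))) := fun X Y Z W => by
    have h := contract_quatR0_cross b hI hJ hK (hR.crossForm X Z) Y W
    simp only [IsAlgCurvTensor.crossForm_apply, mI, mJ, mK, ric] at h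
    rw [h]
    ring
  have hdiff : ∀ X Y Z W, ∑ p, ∑ q, R X (b p) Z (b q) * quatR0 I J K Y (b p) W (b q)
      - ∑ p, ∑ q, R X (b p) W (b q) * quatR0 I J K Y (b p) Z (b q) = -R X Y Z W :=
    fun X Y Z W => by
      rw [hcross, hcross]
      linarith [cross_difference hR hI kI X Y Z W, cross_difference hR hJ kJ X Y Z W,
        cross_difference hR hK kK X Y Z W, hR.pairSymm X W Z Y, hR.antisymm Z Y X W,
        hR.pairSymm X W Y Z, hR.pairSymm X Z W Y, hR.antisymm W Y X Z, hR.pairSymm X Z Y W,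
        hR.bianchi Y Z W X, hR.pairSymm Y Z W X, hR.pairSymm Z W Y X, hR.pairSymm W Y Z X,
        hR.antisymm W X Y Z, hR.antisymm Y X Z W, hR.antisymm Z X W Y,
        hR.antisymm Z X Y W]
  rw [Bop_eq_sum, ← hb, hpair X Y Z W, hpair Z W X Y]
  linarith [hdiff X Y Z W, hdiff Y X W Z, hR.pairSymm X Y Z W, hR.antisymm Y X W Z,
    hR.pairSymm X Y W Z, hR.antisymm W Z X Y]

theorem B_hyperKaehler_R0_vanishes [FiniteDimensional ℝ V]
    (m : ℕ) (hm : 2 ≤ m) (hdim : Module.finrank ℝ V = 4 * m)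
    (I J K : V →ₗ[ℝ] V) (hquat : IsQuatStruct I J K)
    (R₁ : V → V → V → V → ℝ) (hR₁ : IsAlgCurvTensor R₁)
    (hHK : IsHyperKaehler I J K R₁) :
    (∀ X Y Z W : V, Bop R₁ (quatR0 I J K) X Y Z W = 0) ∧
    ∀ (κ : ℝ) (X Y Z W : V),
      Qop (fun X Y Z W => R₁ X Y Z W + κ * quatR0 I J K X Y Z W) X Y Z W
        = Qop R₁ X Y Z W + κ ^ 2 * Qop (quatR0 I J K) X Y Z W := by
  have h0 := Bop_quatR0_eq_zero hquat hR₁ hHK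
  refine ⟨h0, fun κ X Y Z W => ?_⟩
  rw [Qop_add_mul, h0]
  ring
end

section
/- Let V be a real inner product space of dimension 4m ≥ 8 with a quaternionic structure I, J, K, and let R_1 be a hyper-Kähler algebraic curvature tensor on V. Suppose X ∈ V is a unit vector such that R_1(X,JX,X,JX) ≥ R_1(Z,AZ,Z,AZ) for every unit vector Z ∈ V and every A = aI + bJ + cK with a² + b² + c² = 1. Let w ∈ V be a unit vector such that both w and Iw are orthogonal to X and to JX. Then 4 R_1(X,JX,w,Jw)² ≤ R_1(X,JX,X,JX)². -/
/-!
For a complex structure `J` and a `J`-invariant curvature tensor `R`, the holomorphic sectional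
curvature `H(Z) = R(Z, JZ, Z, JZ)` is a quartic form. If a unit vector `X` maximises it on the unit
sphere with value `μ`, the second variation in a unit direction `w ⊥ X` gives
`R(X, JX, w, Jw) + 2 R(X, Jw, X, Jw) ≤ μ` (`holSec_second_variation`). Add this to the same
inequality for `Jw`: since `R(X, w, X, w) + R(X, Jw, X, Jw) = R(X, JX, w, Jw)` by the Bianchi
identity and `J`-invariance (`kaehler_bianchi`), the result is `2 R(X, JX, w, Jw) ≤ μ`
(`holBisec_le_half`), valid when `w` is orthogonal to `X` and `JX`.

In the hyper-Kähler case `IJ = -JI` and the `I`-invariance of `R` imply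
`R(X, JX, Iw, JIw) = -R(X, JX, w, Jw)`, so the bound for `Iw` is the opposite inequality
`-2 R(X, JX, w, Jw) ≤ μ`, and the two together are the squared estimate.
-/

open scoped RealInnerProductSpace
open Finset

variable {V : Type*} [NormedAddCommGroup V] [InnerProductSpace ℝ V]

namespace IsAlgCurvTensor

variable {R : V → V → V → V → ℝ}

lemma addRight (h : IsAlgCurvTensor R) (X Y Y' Z W : V) :
    R X (Y + Y') Z W = R X Y Z W + R X Y' Z W := by
  rw [h.antisymm X (Y + Y'), h.addLeft, h.antisymm X Y, h.antisymm X Y']; ring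

lemma smulRight (h : IsAlgCurvTensor R) (c : ℝ) (X Y Z W : V) :
    R X (c • Y) Z W = c * R X Y Z W := by
  rw [h.antisymm X (c • Y), h.smulLeft, h.antisymm X Y]; ring

lemma addThird (h : IsAlgCurvTensor R) (X Y Z Z' W : V) :
    R X Y (Z + Z') W = R X Y Z W + R X Y Z' W := by
  rw [h.pairSymm X Y (Z + Z'), h.addLeft, h.pairSymm X Y Z, h.pairSymm X Y Z']

lemma smulThird (h : IsAlgCurvTensor R) (c : ℝ) (X Y Z W : V) :
    R X Y (c • Z) W = c * R X Y Z W := by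
  rw [h.pairSymm X Y (c • Z), h.smulLeft, h.pairSymm X Y Z]

lemma addFourth (h : IsAlgCurvTensor R) (X Y Z W W' : V) :
    R X Y Z (W + W') = R X Y Z W + R X Y Z W' := by
  rw [h.pairSymm X Y Z (W + W'), h.addRight, h.pairSymm X Y Z W, h.pairSymm X Y Z W']

lemma smulFourth (h : IsAlgCurvTensor R) (c : ℝ) (X Y Z W : V) :
    R X Y Z (c • W) = c * R X Y Z W := by
  rw [h.pairSymm X Y Z (c • W), h.smulRight, h.pairSymm X Y Z W]

lemma negRight (h : IsAlgCurvTensor R) (X Y Z W : V) : R X (-Y) Z W = -R X Y Z W := by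
  simpa using h.smulRight (-1) X Y Z W

lemma negThird (h : IsAlgCurvTensor R) (X Y Z W : V) : R X Y (-Z) W = -R X Y Z W := by
  simpa using h.smulThird (-1) X Y Z W

lemma negFourth (h : IsAlgCurvTensor R) (X Y Z W : V) : R X Y Z (-W) = -R X Y Z W := by
  simpa using h.smulFourth (-1) X Y Z W

end IsAlgCurvTensor

lemma kaehler_bianchi {R : V → V → V → V → ℝ} (h : IsAlgCurvTensor R) {J : V →ₗ[ℝ] V}
    (hJ : IsOrthCplx J) (hK : IsKaehlerTensor J R) (X w : V) :
    R X (J X) w (J w) = R X w X w + R X (J w) X (J w) := by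
  have b := h.bianchi X (J X) w (J w)
  have e1 : R w X (J X) (J w) = -R X w X w := by rw [hK, h.antisymm]
  have e2 : R (J X) w X (J w) = -R X (J w) X (J w) := by
    rw [h.pairSymm, ← hK, hJ.1, h.negThird]
  linarith

/-- The second variation inequality at a maximum of the holomorphic sectional curvature. -/
lemma holSec_second_variation {R : V → V → V → V → ℝ} (h : IsAlgCurvTensor R) {J : V →ₗ[ℝ] V}
    (hJ : IsOrthCplx J) (hK : IsKaehlerTensor J R) {X : V} (hX : ‖X‖ = 1)
    (hmax : ∀ Z : V, ‖Z‖ = 1 → R Z (J Z) Z (J Z) ≤ R X (J X) X (J X))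
    {w : V} (hw : ‖w‖ = 1) (hwX : ⟪w, X⟫ = 0) :
    R X (J X) w (J w) + 2 * R X (J w) X (J w) ≤ R X (J X) X (J X) := by
  -- By homogeneity the bound on the unit sphere becomes a quartic inequality in `t`.
  have key : ∀ t : ℝ, R (X + t • w) (J (X + t • w)) (X + t • w) (J (X + t • w))
      ≤ R X (J X) X (J X) * (1 + t ^ 2) ^ 2 := by
    intro t
    have hn : ‖X + t • w‖ ^ 2 = 1 + t ^ 2 := by
      rw [norm_add_sq_real, norm_smul, inner_smul_right, real_inner_comm, hwX, hX, hw]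
      simp
    have hpos : 0 < ‖X + t • w‖ := by
      by_contra hc
      have h0 : ‖X + t • w‖ = 0 := le_antisymm (not_lt.mp hc) (norm_nonneg _)
      rw [h0] at hn
      nlinarith
    generalize X + t • w = Y at hn hpos ⊢
    have hm := hmax (‖Y‖⁻¹ • Y)
      (by rw [norm_smul, norm_inv, norm_norm, inv_mul_cancel₀ hpos.ne'])
    simp only [map_smul, h.smulLeft, h.smulRight, h.smulThird, h.smulFourth] at hm
    rw [← hn]
    calc R Y (J Y) Y (J Y)
        = (‖Y‖⁻¹ * (‖Y‖⁻¹ * (‖Y‖⁻¹ * (‖Y‖⁻¹ * R Y (J Y) Y (J Y))))) * (‖Y‖ ^ 2) ^ 2 := by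
          field_simp
      _ ≤ _ := mul_le_mul_of_nonneg_right hm (by positivity)
  have e1 : R w (J X) w (J X) = R X (J w) X (J w) := by
    rw [← hK, hJ.1, h.negFourth, h.pairSymm, ← hK, hJ.1, h.negFourth, h.antisymm (J w),
      h.pairSymm, h.antisymm (J w)]; ring
  have e2 : R w (J X) X (J w) = R X (J w) X (J w) := by
    rw [h.pairSymm, ← hK, hJ.1, h.negFourth, h.pairSymm, h.antisymm (J w)]; ring
  have e3 := h.pairSymm w (J w) X (J X)
  have e4 := h.pairSymm X (J w) w (J X)
  -- Averaging over `t` and `-t` removes the odd terms.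
  have quad : ∀ t : ℝ,
      t ^ 2 * (2 * (R X (J X) w (J w) + 2 * R X (J w) X (J w) - R X (J X) X (J X)))
      ≤ t ^ 4 * (R X (J X) X (J X) - R w (J w) w (J w)) := by
    intro t
    have k1 := key t
    have k2 := key (-t)
    simp only [map_add, map_smul, h.addLeft, h.addRight, h.addThird, h.addFourth,
      h.smulLeft, h.smulRight, h.smulThird, h.smulFourth] at k1 k2
    rw [e1, e3, e4, e2] at k1 k2
    nlinarith
  generalize R X (J X) w (J w) + 2 * R X (J w) X (J w) = P at quad ⊢
  generalize R X (J X) X (J X) = L at quad ⊢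
  generalize R w (J w) w (J w) = M at quad
  by_contra hc
  push Not at hc
  -- For `t² = δ / (|L - M| + 1)` with `δ = P - L > 0`, the right side is at most
  -- `t² δ`, while the left side is `2 t² δ`.
  have hd : 0 < P - L := by linarith
  have ha : 0 < |L - M| + 1 := by positivity
  have hs : 0 < (P - L) / (|L - M| + 1) := by positivity
  have q := quad (√((P - L) / (|L - M| + 1)))
  rw [show ∀ x : ℝ, x ^ 4 = (x ^ 2) ^ 2 from fun x => by ring, Real.sq_sqrt hs.le] at q
  have hle : (P - L) / (|L - M| + 1) * (L - M) ≤ P - L := by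
    rw [div_mul_eq_mul_div, div_le_iff₀ ha]
    nlinarith [le_abs_self (L - M)]
  nlinarith [mul_le_mul_of_nonneg_left hle hs.le, mul_pos hs hd]

/-- At a maximum of the holomorphic sectional curvature, the holomorphic bisectional curvature
with a direction orthogonal to the complex line of `X` is at most half of the maximum. -/
lemma holBisec_le_half {R : V → V → V → V → ℝ} (h : IsAlgCurvTensor R) {J : V →ₗ[ℝ] V}
    (hJ : IsOrthCplx J) (hK : IsKaehlerTensor J R) {X : V} (hX : ‖X‖ = 1)
    (hmax : ∀ Z : V, ‖Z‖ = 1 → R Z (J Z) Z (J Z) ≤ R X (J X) X (J X))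
    {w : V} (hw : ‖w‖ = 1) (hwX : ⟪w, X⟫ = 0) (hwJX : ⟪w, J X⟫ = 0) :
    2 * R X (J X) w (J w) ≤ R X (J X) X (J X) := by
  have hJw : ‖J w‖ = 1 := by
    rw [← hw, ← sq_eq_sq₀ (norm_nonneg _) (norm_nonneg _), ← real_inner_self_eq_norm_sq,
      ← real_inner_self_eq_norm_sq, hJ.2]
  have hJwX : ⟪J w, X⟫ = 0 := by
    rw [← hJ.2, hJ.1, inner_neg_left, hwJX, neg_zero]
  have s1 := holSec_second_variation h hJ hK hX hmax hw hwX
  have s2 := holSec_second_variation h hJ hK hX hmax hJw hJwX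
  rw [hK, hJ.1, h.negFourth, h.negRight, neg_neg] at s2
  linarith [kaehler_bianchi h hJ hK X w]

theorem hyperKaehler_max_estimate [FiniteDimensional ℝ V]
    (m : ℕ) (hm : 2 ≤ m) (hdim : Module.finrank ℝ V = 4 * m)
    (I J K : V →ₗ[ℝ] V) (hquat : IsQuatStruct I J K)
    (R₁ : V → V → V → V → ℝ) (hR₁ : IsAlgCurvTensor R₁)
    (hHK : IsHyperKaehler I J K R₁)
    (X : V) (hX : ‖X‖ = 1)
    (hmax : ∀ Z : V, ‖Z‖ = 1 → ∀ a b c : ℝ, a ^ 2 + b ^ 2 + c ^ 2 = 1 →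
      R₁ Z (a • I Z + b • J Z + c • K Z) Z (a • I Z + b • J Z + c • K Z)
        ≤ R₁ X (J X) X (J X))
    (w : V) (hw : ‖w‖ = 1)
    (hw1 : ⟪w, X⟫ = 0) (hw2 : ⟪w, J X⟫ = 0)
    (hw3 : ⟪I w, X⟫ = 0) (hw4 : ⟪I w, J X⟫ = 0) :
    4 * (R₁ X (J X) w (J w)) ^ 2 ≤ (R₁ X (J X) X (J X)) ^ 2 := by
  obtain ⟨hI, hJ, hK, hIJK⟩ := hquat
  have hIJ : ∀ Y, I (J Y) = K Y := fun Y => by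
    have e := hIJK (K Y)
    rw [hK.1, map_neg, map_neg] at e
    exact neg_injective e
  have hJI : ∀ Y, J (I Y) = -I (J Y) := fun Y => by
    have e := hK.1 (J Y)
    rw [← hIJ, ← hIJ (J Y), hJ.1, map_neg, map_neg, map_neg] at e
    have e' := congrArg I (neg_injective e)
    rwa [hI.1, neg_eq_iff_eq_neg] at e'
  have hmaxJ : ∀ Z : V, ‖Z‖ = 1 → R₁ Z (J Z) Z (J Z) ≤ R₁ X (J X) X (J X) := fun Z hZ => by
    simpa using hmax Z hZ 0 1 0 (by norm_num)
  have hIw : ‖I w‖ = 1 := by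
    rw [← hw, ← sq_eq_sq₀ (norm_nonneg _) (norm_nonneg _), ← real_inner_self_eq_norm_sq,
      ← real_inner_self_eq_norm_sq, hI.2]
  have b1 := holBisec_le_half hR₁ hJ hHK.2.1 hX hmaxJ hw hw1 hw2
  have b2 := holBisec_le_half hR₁ hJ hHK.2.1 hX hmaxJ hIw hw3 hw4
  rw [hJI, hR₁.negFourth, hHK.1] at b2
  nlinarith
end

section
/- Let V be a real inner product space of dimension 2m ≥ 4, let J be an orthogonal complex structure on V, and let R be a J-invariant (Kähler) algebraic curvature tensor on V with nonnegative isotropic curvature. Then R(X,JX,Y,JY) ≥ 0 for all unit vectors X, Y ∈ V with ⟨X,Y⟩ = ⟨JX,Y⟩ = 0. -/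
/-!
By the first Bianchi identity and `J`-invariance, the orthogonal bisectional curvature is a sum of
two sectional curvatures: `R(X,JX,Y,JY) = R(X,Y,X,Y) + R(X,JY,X,JY)`. Hence for the four-frame
`{X, JX, JY, Y}` the isotropic curvature equals `4 R(X,JX,Y,JY)`, which is nonnegative by
hypothesis. (The oppositely ordered frame `{X, JX, Y, JY}` gives `0`, so the order matters.)
-/

open scoped RealInnerProductSpace
open Finset

variable {V : Type*} [NormedAddCommGroup V] [InnerProductSpace ℝ V]

theorem kaehler_nonneg_orthogonal_bisectional [FiniteDimensional ℝ V]
    (m : ℕ) (hm : 2 ≤ m) (hdim : Module.finrank ℝ V = 2 * m)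
    (J : V →ₗ[ℝ] V) (hJ : IsOrthCplx J)
    (R : V → V → V → V → ℝ) (hR : IsAlgCurvTensor R)
    (hK : IsKaehlerTensor J R) (hnn : NonnegIsotropic R)
    (X Y : V) (hX : ‖X‖ = 1) (hY : ‖Y‖ = 1)
    (hXY : ⟪X, Y⟫ = 0) (hJXY : ⟪J X, Y⟫ = 0) :
    0 ≤ R X (J X) Y (J Y) := by
  obtain ⟨hJ2, hJin⟩ := hJ
  have hJnorm : ∀ Z, ‖J Z‖ = ‖Z‖ := by
    intro Z
    rw [norm_eq_sqrt_real_inner, hJin, ← norm_eq_sqrt_real_inner]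
  have hYJX : ⟪Y, J X⟫ = 0 := by rw [real_inner_comm, hJXY]
  have hXJY : ⟪X, J Y⟫ = 0 := by
    have h := hJin X (J Y)
    rw [hJ2, inner_neg_right, hJXY] at h
    linarith
  have skew : ∀ Z, ⟪Z, J Z⟫ = 0 := by
    intro Z
    have h := hJin Z (J Z)
    rw [hJ2, inner_neg_right, real_inner_comm] at h
    linarith
  have hframe : Orthonormal ℝ ![X, J X, J Y, Y] := by
    rw [orthonormal_iff_ite]
    intro i j
    fin_cases i <;> fin_cases j <;>
      simp [hJin, hJnorm, hX, hY, hXY, hYJX, hXJY, skew, real_inner_comm]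
  have h4 := hnn _ _ _ _ hframe
  have negLeft : ∀ A B C D, R (-A) B C D = -R A B C D := by
    intro A B C D
    have h := hR.smulLeft (-1) A B C D
    simpa using h
  have hKl : ∀ A B C D, R (J A) (J B) C D = R A B C D := by
    intro A B C D
    rw [hR.pairSymm, hK, hR.pairSymm]
  -- `J` moves from one entry of a pair to the other at the cost of a sign.
  have hmove : ∀ A B C D, R (J A) B C D = -R A (J B) C D := by
    intro A B C D
    rw [← hKl (J A) B, hJ2, negLeft]
  have hsec₁ : R (J X) Y (J X) Y = R X (J Y) X (J Y) := by
    rw [hmove, hR.pairSymm, hmove, neg_neg]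
  have hsec₂ : R (J X) (J Y) (J X) (J Y) = R X Y X Y := by
    rw [hKl, hK]
  have hmix : R (J X) Y X (J Y) = -R X (J Y) X (J Y) := hmove _ _ _ _
  have hflat : R Y X (J X) (J Y) = -R X Y X Y := by
    rw [hK, hR.antisymm]
  have hB := hR.bianchi X (J X) Y (J Y)
  have hswap : R X (J X) (J Y) Y = -R X (J X) Y (J Y) := by
    rw [hR.pairSymm, hR.antisymm, hR.pairSymm]
  linarith
end
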